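/- arXiv:1712.06268 — 5 statements merged into one kernel-verified Lean document; each statement's English description precedes it below -/
import Mathlib

section
/- Let Ω = (ℝⁿ × (0,∞)) ∖ Σ. Then u is Fréchet differentiable at every point of Ω and the derivative map (x,t) ↦ Du(x,t) is continuous on Ω (continuous as a map from Ω with the subspace topology to ℝⁿ⁺¹); i.e., u is C¹ on the complement of its set of nondifferentiable points. -/
open scoped InnerProductSpace Topology ENNReal
open Filter

noncomputable section

/-- Euclidean space `ℝⁿ`. -/
abbrev Euc (n : ℕ) := EuclideanSpace ℝ (Fin n)

/-- Hopf–Lax solution of the Eikonal equation `uₜ + |∇u| = 0` with initial data `g`: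
`u(x,t) = min {g(y) : |y - x| ≤ t}`. -/
def HLu {n : ℕ} (g : Euc n → ℝ) (x : Euc n) (t : ℝ) : ℝ :=
  sInf (g '' Metric.closedBall x t)

/-- The set of minimizers `L(x,t) = {y : |y - x| ≤ t ∧ g y = u(x,t)}`. -/
def HLL {n : ℕ} (g : Euc n → ℝ) (x : Euc n) (t : ℝ) : Set (Euc n) :=
  {y | ‖y - x‖ ≤ t ∧ g y = HLu g x t}

/-- The set `Σ` of points of `ℝⁿ × (0,∞)` at which `u` is not Fréchet differentiable. -/
def SigmaSet {n : ℕ} (g : Euc n → ℝ) : Set (Euc n × ℝ) :=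
  {p | 0 < p.2 ∧ ¬ DifferentiableAt ℝ (fun q : Euc n × ℝ => HLu g q.1 q.2) p}

lemma HL_exists {n : ℕ} (g : Euc n → ℝ) (hc : Continuous g) (p : Euc n × ℝ) (hp : 0 < p.2) :
    ∃ y, y ∈ HLL g p.1 p.2 := by
  have hcp : IsCompact (Metric.closedBall p.1 p.2) := isCompact_closedBall _ _
  obtain ⟨y, hy, h⟩ := hcp.exists_sInf_image_eq (Metric.nonempty_closedBall.2 hp.le)
    hc.continuousOn
  exact ⟨y, by simpa [dist_eq_norm] using hy, h.symm⟩

lemma HL_le {n : ℕ} (g : Euc n → ℝ) (hc : Continuous g) (x : Euc n) (t : ℝ) (z : Euc n)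
    (hz : ‖z - x‖ ≤ t) : HLu g x t ≤ g z := by
  have hcp : IsCompact (Metric.closedBall x t) := isCompact_closedBall _ _
  exact csInf_le (hcp.image hc).bddBelow ⟨z, by simpa [dist_eq_norm] using hz, rfl⟩

def HLF {n : ℕ} (Dg : Euc n → Euc n) (p : Euc n × ℝ) (y : Euc n) : Euc n × ℝ →L[ℝ] ℝ :=
  (innerSL ℝ (Dg y)).comp (ContinuousLinearMap.fst ℝ (Euc n) ℝ +
    (ContinuousLinearMap.snd ℝ (Euc n) ℝ).smulRight (p.2⁻¹ • (y - p.1)))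

lemma HL_fderiv {n : ℕ} (g : Euc n → ℝ) (Dg : Euc n → Euc n)
    (hg : ∀ y, HasGradientAt g (Dg y) y) (hc : Continuous g) (p : Euc n × ℝ) (hp : 0 < p.2)
    (hd : DifferentiableAt ℝ (fun q : Euc n × ℝ => HLu g q.1 q.2) p) (y : Euc n)
    (hy : y ∈ HLL g p.1 p.2) :
    fderiv ℝ (fun q : Euc n × ℝ => HLu g q.1 q.2) p = HLF Dg p y := by
  let A : Euc n × ℝ →L[ℝ] Euc n := ContinuousLinearMap.fst ℝ (Euc n) ℝ +
    (ContinuousLinearMap.snd ℝ (Euc n) ℝ).smulRight (p.2⁻¹ • (y - p.1))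
  have hAp : A p = y := by simp [A, smul_smul, hp.ne']
  have hφ : HasFDerivAt (fun q => g (A q)) (HLF Dg p y) p := by
    have h1 : HasFDerivAt g (innerSL ℝ (Dg y)) (A p) := by
      rw [hAp]; exact (hg y).hasFDerivAt
    exact h1.comp p A.hasFDerivAt
  have hmin : IsLocalMin (fun q : Euc n × ℝ => g (A q) - HLu g q.1 q.2) p := by
    have : ∀ᶠ q : Euc n × ℝ in 𝓝 p, 0 < q.2 :=
      continuous_snd.continuousAt.eventually (lt_mem_nhds hp)
    filter_upwards [this] with q hq
    have h2 : g (A p) - HLu g p.1 p.2 = 0 := by rw [hAp, hy.2, sub_self]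
    rw [h2, sub_nonneg]
    apply HL_le g hc
    have h3 : A q - q.1 = (q.2 * p.2⁻¹) • (y - p.1) := by simp [A, smul_smul]
    rw [h3, norm_smul, Real.norm_of_nonneg (by positivity)]
    calc q.2 * p.2⁻¹ * ‖y - p.1‖ ≤ q.2 * p.2⁻¹ * p.2 := by
          gcongr; exact hy.1
      _ = q.2 := by field_simp
  have := hmin.hasFDerivAt_eq_zero (hφ.sub hd.hasFDerivAt)
  exact (sub_eq_zero.1 this).symm

theorem C1_regularity_off_Sigma {n : ℕ} (hn : 0 < n) (g : Euc n → ℝ) (Dg : Euc n → Euc n)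
    (hg : ∀ y, HasGradientAt g (Dg y) y) (hDg : Continuous Dg) :
    (∀ p ∈ {p : Euc n × ℝ | 0 < p.2} \ SigmaSet g,
      DifferentiableAt ℝ (fun q : Euc n × ℝ => HLu g q.1 q.2) p) ∧
    ContinuousOn (fun p => fderiv ℝ (fun q : Euc n × ℝ => HLu g q.1 q.2) p)
      ({p : Euc n × ℝ | 0 < p.2} \ SigmaSet g) := by
  have hc : Continuous g := continuous_iff_continuousAt.2 fun y => (hg y).continuousAt
  have hdiff : ∀ p ∈ {p : Euc n × ℝ | 0 < p.2} \ SigmaSet g,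
      DifferentiableAt ℝ (fun q : Euc n × ℝ => HLu g q.1 q.2) p := by
    rintro p ⟨hp, hs⟩
    by_contra h
    exact hs ⟨hp, h⟩
  refine ⟨hdiff, ?_⟩
  intro p hpΩ
  have hp : 0 < p.2 := hpΩ.1
  refine tendsto_of_subseq_tendsto fun q hq => ?_
  have hq1 : Tendsto q atTop (𝓝 p) := (tendsto_nhdsWithin_iff.1 hq).1
  have hq2 := (tendsto_nhdsWithin_iff.1 hq).2
  have hex : ∀ k, ∃ y, 0 < (q k).2 → y ∈ HLL g (q k).1 (q k).2 := fun k => by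
    by_cases h : 0 < (q k).2
    · obtain ⟨y, hy⟩ := HL_exists g hc (q k) h
      exact ⟨y, fun _ => hy⟩
    · exact ⟨0, fun h' => absurd h' h⟩
  choose y hy using hex
  have hball : ∀ᶠ k in atTop, y k ∈ Metric.closedBall p.1 (p.2 + 2) := by
    filter_upwards [hq2, hq1.eventually (Metric.ball_mem_nhds p one_pos)] with k hk hk'
    have h1 := (hy k hk.1).1
    rw [Prod.dist_eq, max_lt_iff] at hk'
    have h2 := hk'.2
    rw [Real.dist_eq] at h2
    have h3 := (abs_lt.1 h2).2
    rw [← dist_eq_norm] at h1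
    have := dist_triangle (y k) (q k).1 p.1
    rw [Metric.mem_closedBall]
    linarith [hk'.1]
  obtain ⟨z, -, ms, hms, hz⟩ := (isCompact_closedBall p.1 (p.2 + 2)).tendsto_subseq'
    hball.frequently
  refine ⟨ms, ?_⟩
  have hqm : Tendsto (fun k => q (ms k)) atTop (𝓝 p) := hq1.comp hms.tendsto_atTop
  have hev : ∀ᶠ k in atTop, q (ms k) ∈ {p : Euc n × ℝ | 0 < p.2} \ SigmaSet g :=
    hms.tendsto_atTop.eventually hq2
  have hz' : Tendsto (fun k => y (ms k)) atTop (𝓝 z) := hz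
  have hqa : Tendsto (fun k => (q (ms k)).1) atTop (𝓝 p.1) :=
    (continuous_fst.tendsto p).comp hqm
  have hqb : Tendsto (fun k => (q (ms k)).2) atTop (𝓝 p.2) :=
    (continuous_snd.tendsto p).comp hqm
  have hzL : z ∈ HLL g p.1 p.2 := by
    constructor
    · refine le_of_tendsto_of_tendsto (hz'.sub hqa).norm hqb ?_
      filter_upwards [hev] with k hk
      exact (hy _ hk.1).1
    · have h1 : Tendsto (fun k => g (y (ms k))) atTop (𝓝 (g z)) := (hc.tendsto z).comp hz'
      have h2 : Tendsto (fun k => HLu g (q (ms k)).1 (q (ms k)).2) atTop (𝓝 (HLu g p.1 p.2)) :=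
        (hdiff p hpΩ).continuousAt.tendsto.comp hqm
      refine tendsto_nhds_unique h1 (h2.congr' ?_)
      filter_upwards [hev] with k hk
      exact (hy _ hk.1).2.symm
  beta_reduce
  rw [HL_fderiv g Dg hg hc p hp (hdiff p hpΩ) z hzL]
  have hF : Tendsto (fun k => HLF Dg (q (ms k)) (y (ms k))) atTop (𝓝 (HLF Dg p z)) := by
    have hv : Tendsto (fun k => (q (ms k)).2⁻¹ • (y (ms k) - (q (ms k)).1)) atTop
        (𝓝 (p.2⁻¹ • (z - p.1))) := (hqb.inv₀ hp.ne').smul (hz'.sub hqa)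
    have hD : Tendsto (fun k => innerSL ℝ (Dg (y (ms k)))) atTop (𝓝 (innerSL ℝ (Dg z))) :=
      (((innerSL ℝ).continuous.comp hDg).tendsto z).comp hz'
    have hS : Tendsto (fun k => (ContinuousLinearMap.snd ℝ (Euc n) ℝ).smulRight
        ((q (ms k)).2⁻¹ • (y (ms k) - (q (ms k)).1))) atTop
        (𝓝 ((ContinuousLinearMap.snd ℝ (Euc n) ℝ).smulRight (p.2⁻¹ • (z - p.1)))) :=
      ((ContinuousLinearMap.smulRightL ℝ (Euc n × ℝ) (Euc n)
        (ContinuousLinearMap.snd ℝ (Euc n) ℝ)).continuous.tendsto _).comp hv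
    have hS2 := (tendsto_const_nhds (x := ContinuousLinearMap.fst ℝ (Euc n) ℝ)
      (f := (atTop : Filter ℕ))).add hS
    exact ((ContinuousLinearMap.compL ℝ (Euc n × ℝ) (Euc n) ℝ).continuous₂.tendsto
      (_, _)).comp (hD.prodMk_nhds hS2)
  refine hF.congr' ?_
  filter_upwards [hev] with k hk
  exact (HL_fderiv g Dg hg hc _ hk.1 (hdiff _ hk) _ (hy _ hk.1)).symm
end
end

section
/- Suppose g is twice continuously differentiable (C²). Then for every y₀ ∈ ℝⁿ with Dg(y₀) ≠ 0, the first termination time satisfies t̄ₛ(y₀) > 0; i.e., there exists t₀ > 0 such that for all t ∈ (0, t₀], y₀ is the unique minimizer for (X(y₀,t), t). -/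
open scoped InnerProductSpace Topology ENNReal
open Filter

noncomputable section

/-- The characteristic from `y₀`: `X(y₀,t) = y₀ + t • Dg(y₀)/|Dg(y₀)|`. -/
def charX {n : ℕ} (Dg : Euc n → Euc n) (y₀ : Euc n) (t : ℝ) : Euc n :=
  y₀ + t • (‖Dg y₀‖⁻¹ • Dg y₀)

/-- First termination time `t̄ₛ(y₀) = sup {t > 0 : L(X(y₀,t),t) = {y₀}}`, in `[0,∞]`
(`sup ∅ = 0`). -/
def tbar {n : ℕ} (g : Euc n → ℝ) (Dg : Euc n → Euc n) (y₀ : Euc n) : ℝ≥0∞ :=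
  sSup (ENNReal.ofReal '' {t : ℝ | 0 < t ∧ HLL g (charX Dg y₀ t) t = {y₀}})

/-- Second termination time `tₛ(y₀) = inf {t > 0 : y₀ ∉ L(X(y₀,t),t)}`, in `[0,∞]`
(`inf ∅ = ∞`). -/
def tsnd {n : ℕ} (g : Euc n → ℝ) (Dg : Euc n → Euc n) (y₀ : Euc n) : ℝ≥0∞ :=
  sInf (ENNReal.ofReal '' {t : ℝ | 0 < t ∧ y₀ ∉ HLL g (charX Dg y₀ t) t})

lemma quad_lower {n : ℕ} (g : Euc n → ℝ) (Dg : Euc n → Euc n)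
    (hg2 : ContDiff ℝ 2 g) (hg : ∀ y, HasGradientAt g (Dg y) y) (y₀ : Euc n) :
    ∃ K r : ℝ, 0 ≤ K ∧ 0 < r ∧ ∀ y, ‖y - y₀‖ < r →
      g y₀ + ⟪Dg y₀, y - y₀⟫_ℝ - K * ‖y - y₀‖ ^ 2 ≤ g y := by
  have h1 : ContDiff ℝ 1 (fderiv ℝ g) := hg2.fderiv_right (by norm_num)
  obtain ⟨K, s, hs, hL⟩ := (h1.contDiffAt (x := y₀)).exists_lipschitzOnWith
  obtain ⟨r, hr, hrs⟩ := Metric.mem_nhds_iff.1 hs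
  refine ⟨K, r, K.2, hr, fun y hyr => ?_⟩
  have hd : ∀ x, HasFDerivAt g (fderiv ℝ g x) x := fun x =>
    (hg2.differentiable (by norm_num) x).hasFDerivAt
  have key := (convex_closedBall y₀ ‖y - y₀‖).norm_image_sub_le_of_norm_hasFDerivWithin_le
    (f := fun x => g x - fderiv ℝ g y₀ x) (f' := fun x => fderiv ℝ g x - fderiv ℝ g y₀)
    (C := K * ‖y - y₀‖) (x := y₀) (y := y)
    (fun x _ => ((hd x).sub (fderiv ℝ g y₀).hasFDerivAt).hasFDerivWithinAt)
    (fun x hx => by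
      have hx' : ‖x - y₀‖ ≤ ‖y - y₀‖ := by simpa [dist_eq_norm] using hx
      have := hL.norm_sub_le (hrs (show x ∈ Metric.ball y₀ r by
        rw [mem_ball_iff_norm]; linarith)) (hrs (Metric.mem_ball_self hr))
      exact this.trans (by gcongr))
    (by simp) (by simp [dist_eq_norm])
  have he : fderiv ℝ g y₀ = (InnerProductSpace.toDual ℝ (Euc n)) (Dg y₀) :=
    (hg y₀).hasFDerivAt.fderiv
  have e2 : fderiv ℝ g y₀ y - fderiv ℝ g y₀ y₀ = ⟪Dg y₀, y - y₀⟫_ℝ := by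
    rw [← map_sub, he, InnerProductSpace.toDual_apply_apply]
  rw [Real.norm_eq_abs] at key
  have := (abs_le.1 key).1
  nlinarith

theorem tbar_pos_of_C2 {n : ℕ} (hn : 0 < n) (g : Euc n → ℝ) (Dg : Euc n → Euc n)
    (hg2 : ContDiff ℝ 2 g) (hg : ∀ y, HasGradientAt g (Dg y) y)
    (y₀ : Euc n) (hy : Dg y₀ ≠ 0) :
    0 < tbar g Dg y₀ ∧
      ∃ t₀ : ℝ, 0 < t₀ ∧ ∀ t : ℝ, 0 < t → t ≤ t₀ → HLL g (charX Dg y₀ t) t = {y₀} := by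
  have main : ∃ t₀ : ℝ, 0 < t₀ ∧ ∀ t : ℝ, 0 < t → t ≤ t₀ →
      HLL g (charX Dg y₀ t) t = {y₀} := by
    obtain ⟨K, r, hK, hr, hq⟩ := quad_lower g Dg hg2 hg y₀
    have hp : 0 < ‖Dg y₀‖ := norm_pos_iff.2 hy
    refine ⟨min (r / 3) (‖Dg y₀‖ / (2 * (K + 1))), by positivity, fun t ht htt => ?_⟩
    have ht1 : t ≤ r / 3 := htt.trans (min_le_left _ _)
    have ht2 : t * (2 * (K + 1)) ≤ ‖Dg y₀‖ :=
      (le_div_iff₀ (by positivity)).1 (htt.trans (min_le_right _ _))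
    have hun : ‖‖Dg y₀‖⁻¹ • Dg y₀‖ = 1 := by
      rw [norm_smul, norm_inv, norm_norm, inv_mul_cancel₀ hp.ne']
    have hv : ‖t • (‖Dg y₀‖⁻¹ • Dg y₀)‖ = t := by
      rw [norm_smul, hun, mul_one, Real.norm_of_nonneg ht.le]
    have h0 : ‖y₀ - charX Dg y₀ t‖ ≤ t := by
      rw [charX, sub_add_cancel_left, norm_neg, hv]
    have hlow : ∀ y, ‖y - charX Dg y₀ t‖ ≤ t → g y₀ + ‖y - y₀‖ ^ 2 ≤ g y := by
      intro y hyt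
      have hsub : y - charX Dg y₀ t = (y - y₀) - t • (‖Dg y₀‖⁻¹ • Dg y₀) := by
        rw [charX]; abel
      have hyr : ‖y - y₀‖ < r := by
        have : y - y₀ = (y - charX Dg y₀ t) + t • (‖Dg y₀‖⁻¹ • Dg y₀) := by
          rw [hsub]; abel
        have h3 := norm_add_le (y - charX Dg y₀ t) (t • (‖Dg y₀‖⁻¹ • Dg y₀))
        rw [← this, hv] at h3
        linarith
      have hq' := hq y hyr
      have hsq : ‖y - charX Dg y₀ t‖ ^ 2 ≤ t ^ 2 := by gcongr
      rw [hsub, norm_sub_sq_real, hv, inner_smul_right, inner_smul_right,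
        real_inner_comm] at hsq
      set a := ⟪Dg y₀, y - y₀⟫_ℝ
      set N := ‖y - y₀‖
      set P := ‖Dg y₀‖
      have h4 : N ^ 2 ≤ 2 * (t * (P⁻¹ * a)) := by linarith
      have h5 : P * N ^ 2 ≤ 2 * t * a := by
        calc P * N ^ 2 ≤ P * (2 * (t * (P⁻¹ * a))) := by gcongr
          _ = 2 * t * a := by field_simp
      have h6 : t * (2 * (K + 1)) * N ^ 2 ≤ P * N ^ 2 := by gcongr
      have h7 : (2 * t) * ((K + 1) * N ^ 2) ≤ (2 * t) * a := by linarith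
      have h8 := le_of_mul_le_mul_left h7 (by positivity)
      linarith
    have hu : HLu g (charX Dg y₀ t) t = g y₀ := by
      refine IsLeast.csInf_eq ⟨⟨y₀, by simpa [dist_eq_norm] using h0, rfl⟩, ?_⟩
      rintro _ ⟨y, hyb, rfl⟩
      have := hlow y (by simpa [dist_eq_norm] using hyb)
      nlinarith [sq_nonneg ‖y - y₀‖]
    ext y
    simp only [HLL, Set.mem_setOf_eq, Set.mem_singleton_iff, hu]
    constructor
    · rintro ⟨h1, h2⟩
      have h3 := hlow y h1
      have h4 : ‖y - y₀‖ ^ 2 = 0 := le_antisymm (by linarith) (sq_nonneg _)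
      exact sub_eq_zero.1 (norm_eq_zero.1 (pow_eq_zero_iff (by norm_num) |>.1 h4))
    · rintro rfl
      exact ⟨h0, rfl⟩
  refine ⟨?_, main⟩
  obtain ⟨t₀, h0, h⟩ := main
  exact (ENNReal.ofReal_pos.2 h0).trans_le
    (le_sSup ⟨t₀, ⟨h0, h t₀ h0 le_rfl⟩, rfl⟩)
end
end

section
/- Suppose g is twice continuously differentiable (C²). Then for every y₀ ∈ ℝⁿ with Dg(y₀) ≠ 0, one has liminf_{y → y₀} tₛ(y) = liminf_{y → y₀} t̄ₛ(y) = t̄ₛ(y₀), where the liminfs are taken in the extended reals [0,∞] along the punctured neighborhood filter of y₀ (this also holds when t̄ₛ(y₀) = ∞). -/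
open scoped InnerProductSpace Topology ENNReal
open Filter

noncomputable section

/-- unit direction -/
def uN {n : ℕ} (Dg : Euc n → Euc n) (y : Euc n) : Euc n := ‖Dg y‖⁻¹ • Dg y

lemma uN_norm {n : ℕ} {Dg : Euc n → Euc n} {y : Euc n} (h : Dg y ≠ 0) : ‖uN Dg y‖ = 1 := by
  have : ‖Dg y‖ ≠ 0 := norm_ne_zero_iff.2 h
  simp [uN, norm_smul, this]

lemma uN_smul {n : ℕ} {Dg : Euc n → Euc n} {y : Euc n} (h : Dg y ≠ 0) :
    Dg y = ‖Dg y‖ • uN Dg y := by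
  have : ‖Dg y‖ ≠ 0 := norm_ne_zero_iff.2 h
  simp [uN, smul_smul, this]

lemma mem_iff {n : ℕ} {Dg : Euc n → Euc n} {y : Euc n} (h : Dg y ≠ 0) {t : ℝ} (ht : 0 < t)
    (z : Euc n) : ‖z - charX Dg y t‖ ≤ t ↔ ‖z - y‖ ^ 2 ≤ 2 * t * ⟪uN Dg y, z - y⟫_ℝ := by
  have e : z - charX Dg y t = (z - y) - t • uN Dg y := by
    simp only [charX, uN]; abel
  have h1 : ‖z - charX Dg y t‖ ^ 2 = ‖z - y‖ ^ 2 - 2 * t * ⟪uN Dg y, z - y⟫_ℝ + t ^ 2 := by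
    rw [e, norm_sub_sq_real, inner_smul_right, norm_smul, uN_norm h, real_inner_comm,
      Real.norm_eq_abs, mul_one, sq_abs]
    ring
  rw [← sq_le_sq₀ (norm_nonneg _) ht.le, h1]
  constructor <;> intro <;> linarith

lemma HLu_le {n : ℕ} {g : Euc n → ℝ} (hc : Continuous g) {x z : Euc n} {t : ℝ}
    (hz : ‖z - x‖ ≤ t) : HLu g x t ≤ g z := by
  apply csInf_le ((isCompact_closedBall x t).image hc).bddBelow
  exact ⟨z, by simpa [dist_eq_norm] using hz, rfl⟩

lemma mem_HLL {n : ℕ} {g : Euc n → ℝ} (hc : Continuous g) {x y : Euc n} {t : ℝ}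
    (hy : ‖y - x‖ ≤ t) : y ∈ HLL g x t ↔ ∀ z, ‖z - x‖ ≤ t → g y ≤ g z := by
  constructor
  · rintro ⟨_, h⟩ z hz
    rw [h]; exact HLu_le hc hz
  · intro h
    refine ⟨hy, le_antisymm ?_ (HLu_le hc hy)⟩
    apply le_csInf
    · exact ⟨g y, y, by simpa [dist_eq_norm] using hy, rfl⟩
    · rintro _ ⟨z, hz, rfl⟩
      exact h z (by simpa [dist_eq_norm] using hz)

lemma HLL_eq {n : ℕ} {g : Euc n → ℝ} (hc : Continuous g) {x y : Euc n} {t : ℝ}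
    (hy : ‖y - x‖ ≤ t) : HLL g x t = {y} ↔ ∀ z, z ≠ y → ‖z - x‖ ≤ t → g y < g z := by
  constructor
  · intro h z hzy hz
    have h1 : y ∈ HLL g x t := by rw [h]; rfl
    refine lt_of_le_of_ne ((mem_HLL hc hy).1 h1 z hz) ?_
    intro he
    have : z ∈ HLL g x t := ⟨hz, he ▸ h1.2⟩
    rw [h] at this
    exact hzy this
  · intro h
    have h1 : y ∈ HLL g x t := (mem_HLL hc hy).2 (fun z hz => by
      by_cases e : z = y
      · rw [e]
      · exact (h z e hz).le)
    ext z
    constructor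
    · intro hz
      by_contra e
      have := h z e hz.1
      rw [hz.2, h1.2] at this
      exact lt_irrefl _ this
    · rintro rfl; exact h1

/-- strict minimality -/
def SM {n : ℕ} (g : Euc n → ℝ) (Dg : Euc n → Euc n) (y : Euc n) (t : ℝ) : Prop :=
  ∀ z, z ≠ y → ‖z - y‖ ^ 2 ≤ 2 * t * ⟪uN Dg y, z - y⟫_ℝ → g y < g z

lemma self_mem {n : ℕ} {Dg : Euc n → Euc n} {y : Euc n} (h : Dg y ≠ 0) {t : ℝ} (ht : 0 < t) :
    ‖y - charX Dg y t‖ ≤ t := (mem_iff h ht y).2 (by simp)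

lemma HLL_iff {n : ℕ} {g : Euc n → ℝ} (hc : Continuous g) {Dg : Euc n → Euc n} {y : Euc n}
    (h : Dg y ≠ 0) {t : ℝ} (ht : 0 < t) : HLL g (charX Dg y t) t = {y} ↔ SM g Dg y t := by
  rw [HLL_eq hc (self_mem h ht)]
  simp only [mem_iff h ht, SM]

lemma mono_ball {n : ℕ} {p h : Euc n} {s t : ℝ} (hs : 0 < s) (hst : s ≤ t)
    (hh : ‖h‖ ^ 2 ≤ 2 * s * ⟪p, h⟫_ℝ) : ‖h‖ ^ 2 ≤ 2 * t * ⟪p, h⟫_ℝ := by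
  have : 0 ≤ ⟪p, h⟫_ℝ := by
    by_contra hc
    push Not at hc
    nlinarith [sq_nonneg ‖h‖]
  nlinarith

lemma SM_mono {n : ℕ} {g : Euc n → ℝ} {Dg : Euc n → Euc n} {y : Euc n} {s t : ℝ} (hs : 0 < s)
    (hst : s ≤ t) (h : SM g Dg y t) : SM g Dg y s :=
  fun z hz hh => h z hz (mono_ball hs hst hh)

lemma SM_of_lt {n : ℕ} {g : Euc n → ℝ} (hc : Continuous g) {Dg : Euc n → Euc n} {y : Euc n}
    (h : Dg y ≠ 0) {t : ℝ} (ht : 0 < t) (hlt : ENNReal.ofReal t < tbar g Dg y) :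
    ∃ t1, t < t1 ∧ SM g Dg y t1 := by
  obtain ⟨_, ⟨t1, ⟨h1, h2⟩, rfl⟩, h3⟩ := lt_sSup_iff.1 hlt
  exact ⟨t1, (ENNReal.ofReal_lt_ofReal_iff h1).1 h3, (HLL_iff hc h h1).1 h2⟩

lemma le_tbar {n : ℕ} {g : Euc n → ℝ} (hc : Continuous g) {Dg : Euc n → Euc n} {y : Euc n}
    (h : Dg y ≠ 0) {t : ℝ} (ht : 0 < t) (hs : SM g Dg y t) : ENNReal.ofReal t ≤ tbar g Dg y :=
  le_sSup ⟨t, ⟨ht, (HLL_iff hc h ht).2 hs⟩, rfl⟩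

lemma tbar_le_tsnd {n : ℕ} {g : Euc n → ℝ} (hc : Continuous g) {Dg : Euc n → Euc n} {y : Euc n}
    (h : Dg y ≠ 0) : tbar g Dg y ≤ tsnd g Dg y := by
  apply le_sInf
  rintro _ ⟨t, ⟨ht, hn⟩, rfl⟩
  by_contra hlt
  push Not at hlt
  obtain ⟨t1, h1, h2⟩ := SM_of_lt hc h ht hlt
  apply hn
  rw [(HLL_iff hc h ht).2 (SM_mono ht h1.le h2)]
  rfl

lemma tsnd_le {n : ℕ} {g : Euc n → ℝ} (hc : Continuous g) {Dg : Euc n → Euc n} {y : Euc n}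
    (h : Dg y ≠ 0) {t : ℝ} (ht : 0 < t) {z : Euc n}
    (hz : ‖z - y‖ ^ 2 ≤ 2 * t * ⟪uN Dg y, z - y⟫_ℝ) (hg : g z < g y) :
    tsnd g Dg y ≤ ENNReal.ofReal t := by
  apply sInf_le
  refine ⟨t, ⟨ht, fun hm => ?_⟩, rfl⟩
  exact absurd ((mem_HLL hc (self_mem h ht)).1 hm z ((mem_iff h ht z).2 hz)) (not_le.2 hg)

lemma uN_cont {n : ℕ} {Dg : Euc n → Euc n} (hD : Continuous Dg) {y : Euc n} (h : Dg y ≠ 0) :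
    ContinuousAt (uN Dg) y :=
  (hD.continuousAt.norm.inv₀ (norm_ne_zero_iff.2 h)).smul hD.continuousAt

lemma freq_up {n : ℕ} {g : Euc n → ℝ} {Dg : Euc n → Euc n} {y : Euc n}
    (hg : HasGradientAt g (Dg y) y) (h : Dg y ≠ 0) : ∃ᶠ x in 𝓝[≠] y, g y < g x := by
  intro hev
  have hloc : IsLocalMax g y := by
    rw [eventually_nhdsWithin_iff] at hev
    filter_upwards [hev] with x hx
    by_cases e : x = y
    · rw [e]
    · exact not_lt.1 (hx e)
  have := hloc.hasFDerivAt_eq_zero hg.hasFDerivAt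
  apply h
  simpa using this

lemma upper {n : ℕ} {g : Euc n → ℝ} (hc : Continuous g) {Dg : Euc n → Euc n} (hD : Continuous Dg)
    {y₀ : Euc n} (hg : HasGradientAt g (Dg y₀) y₀) (h : Dg y₀ ≠ 0) :
    Filter.liminf (fun y => tsnd g Dg y) (𝓝[≠] y₀) ≤ tbar g Dg y₀ := by
  apply le_of_forall_gt_imp_ge_of_dense
  intro a ha
  by_cases hat : a = ⊤
  · rw [hat]; exact le_top
  obtain ⟨b, hb1, hb2⟩ := exists_between ha
  have hbt : b ≠ ⊤ := ne_top_of_lt hb2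
  have hb0 : 0 < b.toReal := ENNReal.toReal_pos (ne_of_gt (lt_of_le_of_lt bot_le hb1)) hbt
  have hba : b.toReal < a.toReal := (ENNReal.toReal_lt_toReal hbt hat).2 hb2
  have hns : ¬ SM g Dg y₀ b.toReal := by
    intro hs
    have := le_tbar hc h hb0 hs
    rw [ENNReal.ofReal_toReal hbt] at this
    exact absurd hb1 (not_lt.2 this)
  unfold SM at hns
  push Not at hns
  obtain ⟨z, hz, hz1, hz2⟩ := hns
  have hpos : 0 < ‖z - y₀‖ ^ 2 := by
    have := norm_pos_iff.2 (sub_ne_zero.2 hz); positivity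
  have hip : 0 < ⟪uN Dg y₀, z - y₀⟫_ℝ := by
    by_contra hcon
    push Not at hcon
    nlinarith
  have hz3 : ‖z - y₀‖ ^ 2 < 2 * a.toReal * ⟪uN Dg y₀, z - y₀⟫_ℝ := by nlinarith
  have hcont1 : ContinuousAt (fun y => ‖z - y‖ ^ 2) y₀ := by fun_prop
  have hcont2 : ContinuousAt (fun y => 2 * a.toReal * ⟪uN Dg y, z - y⟫_ℝ) y₀ :=
    continuousAt_const.mul ((uN_cont hD h).inner (𝕜 := ℝ) (by fun_prop))
  have hev : ∀ᶠ y in 𝓝[≠] y₀, ‖z - y‖ ^ 2 < 2 * a.toReal * ⟪uN Dg y, z - y⟫_ℝ :=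
    (hcont1.eventually_lt hcont2 hz3).filter_mono nhdsWithin_le_nhds
  have hev2 : ∀ᶠ y in 𝓝[≠] y₀, Dg y ≠ 0 :=
    (hD.continuousAt.eventually_ne h).filter_mono nhdsWithin_le_nhds
  apply Filter.liminf_le_of_frequently_le'
  refine ((freq_up hg h).and_eventually (hev.and hev2)).mono ?_
  rintro y ⟨h1, h2, h3⟩
  have := tsnd_le hc h3 (hb0.trans hba) h2.le (lt_of_le_of_lt hz2 h1)
  rwa [ENNReal.ofReal_toReal hat] at this

lemma taylor {n : ℕ} {g : Euc n → ℝ} {Dg : Euc n → Euc n} (hg : ∀ y, HasGradientAt g (Dg y) y)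
    {y₀ : Euc n} {A : Euc n →L[ℝ] Euc n} (hA : HasStrictFDerivAt Dg A y₀) {ε : ℝ} (hε : 0 < ε) :
    ∃ δ > 0, ∀ y ∈ Metric.ball y₀ δ, ∀ z ∈ Metric.ball y₀ δ,
      |g z - g y - ⟪Dg y, z - y⟫_ℝ - 1 / 2 * ⟪A (z - y), z - y⟫_ℝ| ≤ ε * ‖z - y‖ ^ 2 := by
  have h1 := (hA.isLittleO.def hε)
  rw [nhds_prod_eq, ] at h1
  obtain ⟨δ, hδ, h2⟩ := Metric.eventually_nhds_iff_ball.1 (by rw [← nhds_prod_eq] at h1; exact h1)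
  refine ⟨δ, hδ, fun y hy z hz => ?_⟩
  set h := z - y with hh
  let φ : ℝ → ℝ := fun s => g (y + s • h) - s * ⟪Dg y, h⟫_ℝ - s ^ 2 / 2 * ⟪A h, h⟫_ℝ
  have hd : ∀ s ∈ Set.Icc (0 : ℝ) 1, HasDerivWithinAt φ
      (⟪Dg (y + s • h), h⟫_ℝ - ⟪Dg y, h⟫_ℝ - s * ⟪A h, h⟫_ℝ) (Set.Icc 0 1) s := by
    intro s _
    apply HasDerivAt.hasDerivWithinAt
    have e1 : HasDerivAt (fun s : ℝ => y + s • h) h s := by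
      simpa using ((hasDerivAt_id s).smul_const h).const_add y
    have e2 := (hg (y + s • h)).hasFDerivAt.comp_hasDerivAt s e1
    have e3 : HasDerivAt (fun s : ℝ => s * ⟪Dg y, h⟫_ℝ) ⟪Dg y, h⟫_ℝ s := by
      simpa using (hasDerivAt_id s).mul_const ⟪Dg y, h⟫_ℝ
    have e4 : HasDerivAt (fun s : ℝ => s ^ 2 / 2 * ⟪A h, h⟫_ℝ) (s * ⟪A h, h⟫_ℝ) s := by
      have := ((hasDerivAt_pow 2 s).div_const 2).mul_const ⟪A h, h⟫_ℝ
      exact this.congr_deriv (by push_cast; ring)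
    have := (e2.sub e3).sub e4
    exact HasDerivAt.congr_deriv (f := φ) this (by simp)
  have hb : ∀ s ∈ Set.Ico (0 : ℝ) 1,
      ‖⟪Dg (y + s • h), h⟫_ℝ - ⟪Dg y, h⟫_ℝ - s * ⟪A h, h⟫_ℝ‖ ≤ ε * ‖h‖ ^ 2 := by
    intro s hs
    have hmem : y + s • h ∈ Metric.ball y₀ δ := by
      have := (convex_ball y₀ δ).add_smul_sub_mem hy hz ⟨hs.1, hs.2.le⟩
      exact this
    have h3 := h2 (y + s • h, y) (by
      rw [← ball_prod_same]; exact ⟨hmem, hy⟩)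
    simp only [add_sub_cancel_left, map_smul] at h3
    have h4 : ⟪Dg (y + s • h), h⟫_ℝ - ⟪Dg y, h⟫_ℝ - s * ⟪A h, h⟫_ℝ
        = ⟪Dg (y + s • h) - Dg y - s • A h, h⟫_ℝ := by
      simp [inner_sub_left, inner_smul_left]
    rw [h4]
    refine (norm_inner_le_norm _ _).trans ?_
    have h5 : ‖s • h‖ ≤ ‖h‖ := by
      rw [norm_smul, Real.norm_of_nonneg hs.1]
      exact mul_le_of_le_one_left (norm_nonneg _) hs.2.le
    calc _ ≤ (ε * ‖s • h‖) * ‖h‖ := by gcongr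
      _ ≤ (ε * ‖h‖) * ‖h‖ := by gcongr
      _ = _ := by ring
  have := norm_image_sub_le_of_norm_deriv_le_segment_01' hd hb
  have e : y + h = z := by simp [hh]
  have e' : φ 1 - φ 0 = g z - g y - ⟪Dg y, h⟫_ℝ - 1 / 2 * ⟪A h, h⟫_ℝ := by
    simp only [φ, one_smul, zero_smul, e, add_zero]; ring
  rw [e', Real.norm_eq_abs] at this
  exact this

lemma second_order {n : ℕ} {g : Euc n → ℝ} {Dg : Euc n → Euc n}
    (hg : ∀ y, HasGradientAt g (Dg y) y)
    {y₀ : Euc n} (h0 : Dg y₀ ≠ 0) {A : Euc n →L[ℝ] Euc n} (hA : HasStrictFDerivAt Dg A y₀)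
    {t t1 : ℝ} (ht : 0 < t) (htt : t < t1) (hs : SM g Dg y₀ t1) (v : Euc n)
    (hv : ⟪uN Dg y₀, v⟫_ℝ = 0) : 0 ≤ ⟪A v, v⟫_ℝ + ‖Dg y₀‖ / t * ‖v‖ ^ 2 := by
  by_cases hv0 : v = 0
  · simp [hv0]
  have hvp : 0 < ‖v‖ := norm_pos_iff.2 hv0
  set p := uN Dg y₀ with hp
  have hpn : ‖p‖ = 1 := uN_norm h0
  set l := ‖v‖ ^ 2 / (2 * t) with hl
  have hlv : 2 * t * l = ‖v‖ ^ 2 := by rw [hl]; field_simp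
  have hpp : ⟪p, p⟫_ℝ = 1 := by rw [real_inner_self_eq_norm_sq, hpn]; norm_num
  have key : ∀ ε > 0, 0 ≤ ‖Dg y₀‖ * l + 1 / 2 * ⟪A v, v⟫_ℝ + ε * ‖v‖ ^ 2 := by
    intro ε hε
    obtain ⟨δ, hδ, hT⟩ := taylor hg hA hε
    let w : ℝ → Euc n := fun s => v + (l * s) • p
    have hwc : Continuous w := by fun_prop
    have hw0 : w 0 = v := by simp [w]
    have ht1 : Tendsto (fun s => ‖Dg y₀‖ * l + 1 / 2 * ⟪A (w s), w s⟫_ℝ + ε * ‖w s‖ ^ 2)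
        (𝓝[>] 0) (𝓝 (‖Dg y₀‖ * l + 1 / 2 * ⟪A v, v⟫_ℝ + ε * ‖v‖ ^ 2)) := by
      have hcc : Continuous
          (fun s => ‖Dg y₀‖ * l + 1 / 2 * ⟪A (w s), w s⟫_ℝ + ε * ‖w s‖ ^ 2) := by fun_prop
      have := hcc.tendsto 0
      rw [hw0] at this
      exact this.mono_left nhdsWithin_le_nhds
    apply ge_of_tendsto ht1
    have ev1 : ∀ᶠ s in 𝓝[>] (0 : ℝ), y₀ + s • w s ∈ Metric.ball y₀ δ := by
      have hcc : Continuous (fun s => y₀ + s • w s) := by fun_prop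
      have := hcc.tendsto 0
      simp only [zero_smul, add_zero] at this
      exact (this.eventually (Metric.ball_mem_nhds y₀ hδ)).filter_mono nhdsWithin_le_nhds
    have ev2 : ∀ᶠ s in 𝓝[>] (0 : ℝ), ‖w s‖ ^ 2 < 2 * t1 * l := by
      have hcc : Continuous (fun s => ‖w s‖ ^ 2) := by fun_prop
      have := hcc.tendsto 0
      rw [hw0] at this
      have hlp : 0 < l := by positivity
      exact (this.eventually_lt_const (by rw [← hlv]; gcongr)).filter_mono nhdsWithin_le_nhds
    filter_upwards [ev1, ev2, self_mem_nhdsWithin] with s h1 h2 h3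
    have h3 : 0 < s := h3
    have hip : ⟪p, s • w s⟫_ℝ = l * s ^ 2 := by
      simp only [w, inner_smul_right, inner_add_right, hv, hpp]; ring
    have hTT := hT y₀ (Metric.mem_ball_self hδ) _ h1
    simp only [add_sub_cancel_left] at hTT
    have hge : g y₀ ≤ g (y₀ + s • w s) := by
      by_cases e : y₀ + s • w s = y₀
      · rw [e]
      · refine (hs _ e ?_).le
        rw [add_sub_cancel_left, ← hp, hip, norm_smul, mul_pow, Real.norm_eq_abs, sq_abs]
        have : 0 < s ^ 2 := by positivity
        nlinarith
    have hD : ⟪Dg y₀, s • w s⟫_ℝ = ‖Dg y₀‖ * l * s ^ 2 := by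
      rw [uN_smul h0, inner_smul_left, ← hp, hip, norm_smul, hpn]; simp; ring
    have hAA : ⟪A (s • w s), s • w s⟫_ℝ = s ^ 2 * ⟪A (w s), w s⟫_ℝ := by
      rw [map_smul, inner_smul_left, inner_smul_right]; simp; ring
    have hnn : ‖s • w s‖ ^ 2 = s ^ 2 * ‖w s‖ ^ 2 := by
      rw [norm_smul, mul_pow, Real.norm_eq_abs, sq_abs]
    rw [hD, hAA, hnn] at hTT
    have := (abs_le.1 hTT).2
    have h4 : 0 ≤ s ^ 2 * (‖Dg y₀‖ * l + 1 / 2 * ⟪A (w s), w s⟫_ℝ + ε * ‖w s‖ ^ 2) := by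
      linarith
    exact nonneg_of_mul_nonneg_right h4 (by positivity)
  have : 0 ≤ ‖Dg y₀‖ * l + 1 / 2 * ⟪A v, v⟫_ℝ := by
    apply le_of_forall_pos_le_add
    intro e he
    have := key (e / ‖v‖ ^ 2) (by positivity)
    rwa [div_mul_cancel₀ _ (by positivity)] at this
  have e : ‖Dg y₀‖ / t * ‖v‖ ^ 2 = 2 * (‖Dg y₀‖ * l) := by rw [hl]; field_simp
  linarith

lemma second_order' {n : ℕ} {p : Euc n} (hp : ‖p‖ = 1) {A : Euc n →L[ℝ] Euc n} {c : ℝ}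
    (hc : 0 ≤ c)
    (H : ∀ v, ⟪p, v⟫_ℝ = 0 → 0 ≤ ⟪A v, v⟫_ℝ + c * ‖v‖ ^ 2) (h : Euc n) :
    - c * ‖h‖ ^ 2 - 2 * ‖A‖ * |⟪p, h⟫_ℝ| * ‖h‖ ≤ ⟪A h, h⟫_ℝ := by
  set a := ⟪p, h⟫_ℝ with ha
  set v := h - a • p with hv
  have hpp : ⟪p, p⟫_ℝ = 1 := by rw [real_inner_self_eq_norm_sq, hp]; norm_num
  have hpv : ⟪p, v⟫_ℝ = 0 := by
    rw [hv, inner_sub_right, inner_smul_right, hpp, ← ha]; ring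
  have hh : h = v + a • p := by simp [hv]
  have hn : ‖h‖ ^ 2 = ‖v‖ ^ 2 + a ^ 2 := by
    rw [hh, norm_add_sq_real, inner_smul_right, real_inner_comm, hpv, norm_smul, hp,
      Real.norm_eq_abs, mul_one, sq_abs]; ring
  have hvh : ‖v‖ ≤ ‖h‖ := by
    apply le_of_sq_le_sq _ (norm_nonneg _)
    nlinarith [sq_nonneg a]
  have e : ⟪A h, h⟫_ℝ = ⟪A v, v⟫_ℝ + a * ⟪A v, p⟫_ℝ + a * ⟪A p, h⟫_ℝ := by
    conv_lhs => rw [hh]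
    conv_rhs => rw [hh]
    simp only [map_add, map_smul, inner_add_left, inner_add_right, inner_smul_left,
      inner_smul_right]
    simp; ring
  have b1 : |⟪A v, p⟫_ℝ| ≤ ‖A‖ * ‖h‖ := by
    refine (abs_real_inner_le_norm _ _).trans ?_
    rw [hp, mul_one]
    exact (A.le_opNorm v).trans (by gcongr)
  have b2 : |⟪A p, h⟫_ℝ| ≤ ‖A‖ * ‖h‖ := by
    refine (abs_real_inner_le_norm _ _).trans ?_
    gcongr
    simpa [hp] using A.le_opNorm p
  have c1 : -(|a| * (‖A‖ * ‖h‖)) ≤ a * ⟪A v, p⟫_ℝ := by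
    refine le_trans ?_ (neg_abs_le _)
    rw [abs_mul]; gcongr
  have c2 : -(|a| * (‖A‖ * ‖h‖)) ≤ a * ⟪A p, h⟫_ℝ := by
    refine le_trans ?_ (neg_abs_le _)
    rw [abs_mul]; gcongr
  have := H v hpv
  rw [e]
  nlinarith [sq_nonneg a, mul_nonneg hc (sq_nonneg a)]

lemma local_min {n : ℕ} {g : Euc n → ℝ} {Dg : Euc n → Euc n} (hD : Continuous Dg)
    (hg : ∀ y, HasGradientAt g (Dg y) y)
    {y₀ : Euc n} (h0 : Dg y₀ ≠ 0) {A : Euc n →L[ℝ] Euc n} (hA : HasStrictFDerivAt Dg A y₀)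
    {t t1 : ℝ} (ht : 0 < t) (htt : t < t1) (hs : SM g Dg y₀ t1) :
    ∃ δ > 0, ∀ y ∈ Metric.ball y₀ δ, ∀ z ∈ Metric.ball y₀ δ, z ≠ y →
      ‖z - y‖ ^ 2 ≤ 2 * t * ⟪uN Dg y, z - y⟫_ℝ → g y < g z := by
  obtain ⟨t2, ht2, ht21⟩ := exists_between htt
  have ht20 : 0 < t2 := ht.trans ht2
  set m := ‖Dg y₀‖ with hm
  have hmp : 0 < m := norm_pos_iff.2 h0
  have hQ := second_order' (uN_norm h0) (A := A) (c := m / t2) (by positivity)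
    (fun v hv => second_order hg h0 hA ht20 ht21 hs v hv)
  set p := uN Dg y₀ with hp
  -- choose ε, η by continuity
  have hgap : 0 < m / (2 * t) - m / (2 * t2) := by
    have : m / (2 * t2) < m / (2 * t) := by gcongr
    linarith
  set ε := (m / (2 * t) - m / (2 * t2)) / 2 with hε
  have hεp : 0 < ε := by positivity
  obtain ⟨δ1, hδ1, hT⟩ := taylor hg hA hεp
  have hF : ContinuousAt (fun q : Euc n × ℝ =>
      (‖Dg q.1‖ - ‖A‖ * q.2) / (2 * t) - m / (2 * t2) - ‖A‖ * ‖p - uN Dg q.1‖ - ε) (y₀, 0) := by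
    have c1 : ContinuousAt (fun q : Euc n × ℝ => uN Dg q.1) (y₀, 0) :=
      ContinuousAt.comp (f := Prod.fst) (g := uN Dg) (uN_cont hD h0) continuousAt_fst
    have c2 : ContinuousAt (fun q : Euc n × ℝ => Dg q.1) (y₀, 0) :=
      (hD.comp continuous_fst).continuousAt
    fun_prop
  have hG : ContinuousAt (fun q : Euc n × ℝ => ‖Dg q.1‖ - ‖A‖ * q.2) (y₀, 0) := by
    have c2 : ContinuousAt (fun q : Euc n × ℝ => Dg q.1) (y₀, 0) :=
      (hD.comp continuous_fst).continuousAt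
    fun_prop
  have hE1 := hF.eventually_const_lt (u := 0) (by
    simp only [← hp, mul_zero, sub_zero, sub_self, norm_zero, ← hm]; linarith)
  have hE2 := hG.eventually_const_lt (u := 0) (by
    simp only [mul_zero, sub_zero, ← hm]; exact hmp)
  obtain ⟨δ2, hδ2, hE⟩ := Metric.eventually_nhds_iff_ball.1
    ((hE1.and hE2).and ((hD.comp continuous_fst).continuousAt.eventually_ne h0))
  refine ⟨min δ1 (δ2 / 4), by positivity, fun y hy z hz hzy hb => ?_⟩
  have hy1 := Metric.ball_subset_ball (min_le_left _ _) hy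
  have hz1 := Metric.ball_subset_ball (min_le_left _ _) hz
  have hy2 := Metric.mem_ball.1 (Metric.ball_subset_ball (min_le_right _ _) hy)
  have hz2 := Metric.mem_ball.1 (Metric.ball_subset_ball (min_le_right _ _) hz)
  obtain ⟨⟨hE1, hE2⟩, hE3⟩ := hE (y, δ2 / 2) (by
    rw [← ball_prod_same]
    refine ⟨Metric.mem_ball.2 (by dsimp only; linarith), Metric.mem_ball.2 ?_⟩
    dsimp only
    rw [Real.dist_eq, sub_zero, abs_of_pos (by positivity)]; linarith)
  dsimp only at hE1 hE2 hE3
  have hTT := hT y hy1 z hz1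
  have hhd : ‖z - y‖ ≤ δ2 / 2 := by
    rw [← dist_eq_norm]
    have := dist_triangle_right z y y₀
    linarith
  have hQh := hQ (z - y)
  have hDy : ⟪Dg y, z - y⟫_ℝ = ‖Dg y‖ * ⟪uN Dg y, z - y⟫_ℝ := by
    conv_lhs => rw [uN_smul hE3, inner_smul_left]
    simp
  rw [hDy] at hTT
  have hpos : 0 < ‖z - y‖ := norm_pos_iff.2 (sub_ne_zero.2 hzy)
  set h := z - y with hh
  set b := ⟪uN Dg y, h⟫_ℝ with hbdef
  set N := ‖h‖ with hN
  have hb0 : 0 ≤ b := by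
    by_contra hcon
    push Not at hcon
    nlinarith [sq_nonneg N]
  have hpb : |⟪p, h⟫_ℝ| ≤ b + ‖p - uN Dg y‖ * N := by
    have : ⟪p, h⟫_ℝ = b + ⟪p - uN Dg y, h⟫_ℝ := by rw [inner_sub_left]; ring
    rw [this]
    refine (abs_add_le _ _).trans ?_
    rw [abs_of_nonneg hb0]
    gcongr
    exact abs_real_inner_le_norm _ _
  set r := ‖p - uN Dg y‖ with hr
  have hT2 := (abs_le.1 hTT).1
  have hb' : N ^ 2 / (2 * t) ≤ b := by
    rw [div_le_iff₀ (by positivity)]; linarith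
  have s1 : ‖A‖ * |⟪p, h⟫_ℝ| * N ≤ ‖A‖ * (δ2 / 2) * b + ‖A‖ * r * N ^ 2 := by
    calc _ ≤ ‖A‖ * (b + r * N) * N := by gcongr
      _ = ‖A‖ * N * b + ‖A‖ * r * N ^ 2 := by ring
      _ ≤ _ := by gcongr
  have s2 : (‖Dg y‖ - ‖A‖ * (δ2 / 2)) * (N ^ 2 / (2 * t)) ≤ (‖Dg y‖ - ‖A‖ * (δ2 / 2)) * b := by
    gcongr
  have s3 : 0 < ((‖Dg y‖ - ‖A‖ * (δ2 / 2)) / (2 * t) - m / (2 * t2) - ‖A‖ * r - ε) * N ^ 2 := by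
    positivity
  have s4 : m / t2 * N ^ 2 = 2 * (m / (2 * t2) * N ^ 2) := by field_simp
  have s5 : (‖Dg y‖ - ‖A‖ * (δ2 / 2)) * (N ^ 2 / (2 * t)) =
    (‖Dg y‖ - ‖A‖ * (δ2 / 2)) / (2 * t) * N ^ 2 := by ring
  linarith

lemma lower {n : ℕ} {g : Euc n → ℝ} (hc : Continuous g) {Dg : Euc n → Euc n}
    (hD : Continuous Dg) (hg : ∀ y, HasGradientAt g (Dg y) y)
    {y₀ : Euc n} (h0 : Dg y₀ ≠ 0) {A : Euc n →L[ℝ] Euc n} (hA : HasStrictFDerivAt Dg A y₀) :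
    tbar g Dg y₀ ≤ Filter.liminf (fun y => tbar g Dg y) (𝓝[≠] y₀) := by
  apply le_of_forall_lt_imp_le_of_dense
  intro a ha
  by_cases ha0 : a = 0
  · rw [ha0]; exact bot_le
  have hat : a ≠ ⊤ := ne_top_of_lt ha
  have htp : 0 < a.toReal := ENNReal.toReal_pos ha0 hat
  set t := a.toReal with ht
  have hta : ENNReal.ofReal t = a := ENNReal.ofReal_toReal hat
  obtain ⟨t1, ht1, hs⟩ := SM_of_lt hc h0 htp (by rw [hta]; exact ha)
  obtain ⟨δ, hδ, hloc⟩ := local_min hD hg h0 hA htp ht1 hs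
  have hst := SM_mono htp ht1.le hs
  have hK : IsCompact (Metric.closedBall y₀ (2 * t + 1) \ Metric.ball y₀ δ) :=
    (isCompact_closedBall _ _).diff Metric.isOpen_ball
  have hev : ∀ᶠ y in 𝓝 y₀, ∀ z ∈ Metric.closedBall y₀ (2 * t + 1) \ Metric.ball y₀ δ,
      ‖z - y‖ ^ 2 ≤ 2 * t * ⟪uN Dg y, z - y⟫_ℝ → g y < g z := by
    apply hK.eventually_forall_of_forall_eventually
    intro z hz
    have hzy : z ≠ y₀ := by
      rintro rfl; exact hz.2 (Metric.mem_ball_self hδ)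
    by_cases hb : ‖z - y₀‖ ^ 2 ≤ 2 * t * ⟪uN Dg y₀, z - y₀⟫_ℝ
    · have h1 := hst z hzy hb
      have c1 : ContinuousAt (fun q : Euc n × Euc n => g q.1) (y₀, z) := by fun_prop
      have c2 : ContinuousAt (fun q : Euc n × Euc n => g q.2) (y₀, z) := by fun_prop
      filter_upwards [c1.eventually_lt c2 h1] with q hq _
      exact hq
    · push Not at hb
      have c0 : ContinuousAt (fun q : Euc n × Euc n => uN Dg q.1) (y₀, z) :=
        ContinuousAt.comp (f := Prod.fst) (g := uN Dg) (uN_cont hD h0) continuousAt_fst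
      have c1 : ContinuousAt (fun q : Euc n × Euc n => 2 * t * ⟪uN Dg q.1, q.2 - q.1⟫_ℝ)
        (y₀, z) := continuousAt_const.mul (c0.inner (𝕜 := ℝ) (by fun_prop))
      have c2 : ContinuousAt (fun q : Euc n × Euc n => ‖q.2 - q.1‖ ^ 2) (y₀, z) := by fun_prop
      filter_upwards [c1.eventually_lt c2 hb] with q hq hq2
      exact absurd hq2 (not_le.2 hq)
  apply Filter.le_liminf_of_le
  · isBoundedDefault
  apply Filter.Eventually.filter_mono nhdsWithin_le_nhds
  filter_upwards [hev, Metric.ball_mem_nhds y₀ hδ, Metric.ball_mem_nhds y₀ one_pos,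
    hD.continuousAt.eventually_ne h0] with y h1 h2 h3 h4
  rw [← hta]
  apply le_tbar hc h4 htp
  intro z hzy hb
  by_cases hz : z ∈ Metric.ball y₀ δ
  · exact hloc y h2 z hz hzy hb
  · refine h1 z ⟨?_, hz⟩ hb
    have hpos : 0 < ‖z - y‖ := norm_pos_iff.2 (sub_ne_zero.2 hzy)
    have h5 : ⟪uN Dg y, z - y⟫_ℝ ≤ ‖z - y‖ := by
      have := real_inner_le_norm (uN Dg y) (z - y)
      rwa [uN_norm h4, one_mul] at this
    have h6 : ‖z - y‖ ≤ 2 * t := by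
      have : ‖z - y‖ * ‖z - y‖ ≤ 2 * t * ‖z - y‖ := by nlinarith
      exact le_of_mul_le_mul_right this hpos
    rw [← dist_eq_norm] at h6
    have := dist_triangle z y y₀
    have h3 := Metric.mem_ball.1 h3
    exact Metric.mem_closedBall.2 (by linarith)

theorem liminf_termination_times_of_C2 {n : ℕ} (hn : 0 < n) (g : Euc n → ℝ) (Dg : Euc n → Euc n)
    (hg2 : ContDiff ℝ 2 g) (hg : ∀ y, HasGradientAt g (Dg y) y)
    (y₀ : Euc n) (hy : Dg y₀ ≠ 0) :
    Filter.liminf (fun y => tsnd g Dg y) (𝓝[≠] y₀) = tbar g Dg y₀ ∧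
    Filter.liminf (fun y => tbar g Dg y) (𝓝[≠] y₀) = tbar g Dg y₀ := by
  have hc : Continuous g := hg2.continuous
  have hDC : ContDiff ℝ 1 Dg := by
    have e : Dg = fun y => (InnerProductSpace.toDual ℝ (Euc n)).symm (fderiv ℝ g y) := by
      funext y
      rw [(hg y).hasFDerivAt.fderiv]; simp
    rw [e]
    exact (InnerProductSpace.toDual ℝ (Euc n)).symm.contDiff.comp
      (hg2.fderiv_right (m := 1) (by norm_num))
  have hD := hDC.continuous
  have hA := (hDC.contDiffAt (x := y₀)).hasStrictFDerivAt (by norm_num)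
  have h1 := upper hc hD (hg y₀) hy
  have h2 := lower hc hD hg hy hA
  have h3 : Filter.liminf (fun y => tbar g Dg y) (𝓝[≠] y₀) ≤
      Filter.liminf (fun y => tsnd g Dg y) (𝓝[≠] y₀) := by
    refine Filter.liminf_le_liminf ?_
    filter_upwards [(hD.continuousAt.eventually_ne hy).filter_mono nhdsWithin_le_nhds] with y h
    exact tbar_le_tsnd hc h
  exact ⟨le_antisymm h1 (h2.trans h3), le_antisymm (h3.trans h1) h2⟩
end
end

section
/- Suppose g is twice continuously differentiable (C²). Then the set Σ ∪ T₁ ⊂ ℝⁿ × (0,∞) has at most countably many path-connected components; equivalently, Σ ∪ T₁ is the union of an at most countable, pairwise disjoint family of nonempty path-connected sets, each a path component of Σ ∪ T₁. -/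
open scoped InnerProductSpace Topology ENNReal
open Filter

noncomputable section

/-- `T(M)`: the set of termination points of characteristics from points with `Dg ≠ 0`. -/
def TM {n : ℕ} (g : Euc n → ℝ) (Dg : Euc n → Euc n) : Set (Euc n × ℝ) :=
  {p | ∃ y₀ : Euc n, ∃ t : ℝ, Dg y₀ ≠ 0 ∧ tbar g Dg y₀ < ⊤ ∧ 0 < t ∧
    tbar g Dg y₀ ≤ ENNReal.ofReal t ∧ ENNReal.ofReal t ≤ tsnd g Dg y₀ ∧
    p = (charX Dg y₀ t, t)}

/-- `T₁`: the points of `T(M)` having a unique minimizer. -/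
def T1 {n : ℕ} (g : Euc n → ℝ) (Dg : Euc n → Euc n) : Set (Euc n × ℝ) :=
  {p ∈ TM g Dg | ∃ y : Euc n, HLL g p.1 p.2 = {y}}

def Nv {n : ℕ} (Dg : Euc n → Euc n) (y : Euc n) : Euc n := ‖Dg y‖⁻¹ • Dg y

def Bl {n : ℕ} (Dg : Euc n → Euc n) (y : Euc n) (s : ℝ) (z : Euc n) : Prop :=
  ‖z - y‖ ^ 2 ≤ 2 * s * inner ℝ (z - y) (Nv Dg y)

def Pm {n : ℕ} (g : Euc n → ℝ) (Dg : Euc n → Euc n) (y : Euc n) (s : ℝ) : Prop :=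
  ∀ z, Bl Dg y s z → g y ≤ g z

def Um {n : ℕ} (g : Euc n → ℝ) (Dg : Euc n → Euc n) (y : Euc n) (s : ℝ) : Prop :=
  ∀ z, Bl Dg y s z → z ≠ y → g y < g z

section basics
variable {n : ℕ} {g : Euc n → ℝ} {Dg : Euc n → Euc n}

lemma nv_norm {y : Euc n} (h : Dg y ≠ 0) : ‖Nv Dg y‖ = 1 := by
  unfold Nv
  rw [norm_smul, norm_inv, norm_norm]
  exact inv_mul_cancel₀ (norm_ne_zero_iff.2 h)

lemma dg_eq {y : Euc n} (h : Dg y ≠ 0) : Dg y = ‖Dg y‖ • Nv Dg y := by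
  unfold Nv
  rw [smul_smul, mul_inv_cancel₀ (norm_ne_zero_iff.2 h), one_smul]

lemma inner_dg {y : Euc n} (h : Dg y ≠ 0) (v : Euc n) :
    inner ℝ (Dg y) v = ‖Dg y‖ * inner ℝ v (Nv Dg y) := by
  conv_lhs => rw [dg_eq h]
  rw [real_inner_smul_left, real_inner_comm]

lemma bl_iff {y : Euc n} (h : Dg y ≠ 0) {s : ℝ} (hs : 0 ≤ s) (z : Euc n) :
    ‖z - charX Dg y s‖ ≤ s ↔ Bl Dg y s z := by
  have e : z - charX Dg y s = (z - y) - s • Nv Dg y := by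
    unfold charX Nv; abel
  rw [e, ← sq_le_sq₀ (norm_nonneg _) hs, norm_sub_sq_real, norm_smul, nv_norm h,
    real_inner_smul_right, Bl, Real.norm_eq_abs, mul_one, sq_abs]
  constructor <;> intro h <;> linarith

lemma bl_inner_nonneg {y z : Euc n} {s : ℝ} (hs : 0 < s) (h : Bl Dg y s z) :
    0 ≤ inner ℝ (z - y) (Nv Dg y) := by
  unfold Bl at h
  have : 0 ≤ s * inner ℝ (z - y) (Nv Dg y) := by nlinarith [sq_nonneg ‖z - y‖]
  exact nonneg_of_mul_nonneg_right this hs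

lemma bl_inner_pos {y z : Euc n} {s : ℝ} (hs : 0 < s) (h : Bl Dg y s z) (hz : z ≠ y) :
    0 < inner ℝ (z - y) (Nv Dg y) := by
  unfold Bl at h
  have h1 : 0 < ‖z - y‖ := norm_pos_iff.2 (sub_ne_zero.2 hz)
  have : 0 < s * inner ℝ (z - y) (Nv Dg y) := by nlinarith [sq_pos_of_pos h1]
  exact pos_of_mul_pos_right this hs.le

lemma bl_mono {y z : Euc n} {s s' : ℝ} (hs : 0 < s) (hss : s ≤ s') (h : Bl Dg y s z) :
    Bl Dg y s' z := by
  have := bl_inner_nonneg hs h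
  unfold Bl at h ⊢
  nlinarith

lemma bl_strict {y z : Euc n} {s s' : ℝ} (hs : 0 < s) (hss : s < s') (h : Bl Dg y s z)
    (hz : z ≠ y) : ‖z - y‖ ^ 2 < 2 * s' * inner ℝ (z - y) (Nv Dg y) := by
  have := bl_inner_pos hs h hz
  unfold Bl at h
  nlinarith

lemma bl_self (y : Euc n) (s : ℝ) : Bl Dg y s y := by simp [Bl]

lemma bl_norm_le {y z : Euc n} {s : ℝ} (hD : Dg y ≠ 0) (hs : 0 < s) (h : Bl Dg y s z) :
    ‖z - y‖ ≤ 2 * s := by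
  unfold Bl at h
  have h1 : inner ℝ (z - y) (Nv Dg y) ≤ ‖z - y‖ := by
    have := real_inner_le_norm (z - y) (Nv Dg y)
    rwa [nv_norm hD, mul_one] at this
  by_contra hc
  push Not at hc
  have : 0 < ‖z - y‖ := by linarith
  nlinarith

lemma Um.pm {y : Euc n} {s : ℝ} (h : Um g Dg y s) : Pm g Dg y s := by
  intro z hz
  by_cases e : z = y
  · rw [e]
  · exact (h z hz e).le

lemma Pm.mono {y : Euc n} {s s' : ℝ} (hs : 0 < s) (hss : s ≤ s') (h : Pm g Dg y s') :
    Pm g Dg y s := fun z hz => h z (bl_mono hs hss hz)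

lemma Um.mono {y : Euc n} {s s' : ℝ} (hs : 0 < s) (hss : s ≤ s') (h : Um g Dg y s') :
    Um g Dg y s := fun z hz => h z (bl_mono hs hss hz)

lemma g_cont (hg : ∀ y, HasGradientAt g (Dg y) y) : Continuous g :=
  continuous_iff_continuousAt.2 fun y => (hg y).continuousAt

lemma Pm_closed (hg : ∀ y, HasGradientAt g (Dg y) y) {y : Euc n} {s : ℝ} (hs : 0 < s)
    (h : ∀ s', 0 < s' → s' < s → Pm g Dg y s') : Pm g Dg y s := by
  intro z hz
  have hc : Tendsto (fun r : ℝ => g (y + r • (z - y))) (𝓝[<] 1) (𝓝 (g z)) := by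
    have : Continuous (fun r : ℝ => g (y + r • (z - y))) := (g_cont hg).comp (by fun_prop)
    have h2 := this.tendsto 1
    simp only [one_smul, add_sub_cancel] at h2
    exact h2.mono_left nhdsWithin_le_nhds
  refine ge_of_tendsto hc ?_
  filter_upwards [Ioo_mem_nhdsLT (zero_lt_one' ℝ)] with r hr
  refine h (r * s) (mul_pos hr.1 hs) (by nlinarith [hr.2]) _ ?_
  unfold Bl at hz ⊢
  rw [add_sub_cancel_left, norm_smul, real_inner_smul_left, mul_pow, Real.norm_eq_abs, sq_abs]
  have : 0 ≤ r ^ 2 := sq_nonneg r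
  nlinarith

lemma dg_contDiff (hg2 : ContDiff ℝ 2 g) (hg : ∀ y, HasGradientAt g (Dg y) y) :
    ContDiff ℝ 1 Dg := by
  have e : Dg = fun y => (InnerProductSpace.toDual ℝ (Euc n)).symm (fderiv ℝ g y) := by
    funext y
    rw [(hg y).hasFDerivAt.fderiv, LinearIsometryEquiv.symm_apply_apply]
  rw [e]
  exact ((InnerProductSpace.toDual ℝ (Euc n)).symm.contDiff).comp
    (hg2.fderiv_right (by norm_num))

lemma expansion (hg2 : ContDiff ℝ 2 g) (hg : ∀ y, HasGradientAt g (Dg y) y) (y₀ : Euc n) :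
    ∃ H : Euc n →L[ℝ] Euc n, ∀ ε > 0, ∃ δ > 0, ∀ y h, ‖y - y₀‖ < δ → ‖y + h - y₀‖ < δ →
      |g (y + h) - g y - inner ℝ (Dg y) h - (1/2) * inner ℝ (H h) h| ≤ ε * ‖h‖ ^ 2 := by
  have hs := ((dg_contDiff hg2 hg).contDiffAt (x := y₀)).hasStrictFDerivAt (by norm_num)
  refine ⟨fderiv ℝ Dg y₀, fun ε hε => ?_⟩
  set H := fderiv ℝ Dg y₀
  have h1 := (hasStrictFDerivAt_iff_isLittleO.1 hs).def hε
  obtain ⟨δ, hδ, h2'⟩ := Metric.eventually_nhds_iff.1 h1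
  have h2 : ∀ x y : Euc n, dist x y₀ < δ → dist y y₀ < δ →
        ‖Dg x - Dg y - H (x - y)‖ ≤ ε * ‖x - y‖ := fun x y hx hy =>
    h2' (y := (x, y)) (by rw [Prod.dist_eq]; exact max_lt hx hy)
  refine ⟨δ, hδ, fun y h hy hyh => ?_⟩
  let θ : ℝ → ℝ := fun t => g (y + t • h) - t * inner ℝ (Dg y) h - (1/2) * t ^ 2 * inner ℝ (H h) h
  have hθ : ∀ t : ℝ, HasDerivAt θ (inner ℝ (Dg (y + t • h) - Dg y - H (t • h)) h) t := by
    intro t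
    have a1 : HasDerivAt (fun t : ℝ => y + t • h) h t := by
      simpa using ((hasDerivAt_id t).smul_const h).const_add y
    have a2 : HasDerivAt (fun t : ℝ => g (y + t • h)) (inner ℝ (Dg (y + t • h)) h) t := by
      exact ((hg (y + t • h)).hasFDerivAt.comp_hasDerivAt t a1).congr_deriv (by simp)
    have a3 : HasDerivAt (fun t : ℝ => t * inner ℝ (Dg y) h) (inner ℝ (Dg y) h) t := by
      simpa using (hasDerivAt_id t).mul_const (inner ℝ (Dg y) h)
    have a4 : HasDerivAt (fun t : ℝ => (1/2) * t ^ 2 * inner ℝ (H h) h) (t * inner ℝ (H h) h) t := by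
      have := (((hasDerivAt_id t).pow 2).const_mul (1/2 : ℝ)).mul_const (inner ℝ (H h) h)
      exact this.congr_deriv (by simp)
    refine ((a2.sub a3).sub a4).congr_deriv ?_
    rw [inner_sub_left, inner_sub_left, map_smul, real_inner_smul_left]
  have key := norm_image_sub_le_of_norm_deriv_le_segment_01' (f := θ) (C := ε * ‖h‖ ^ 2)
    (fun t _ => (hθ t).hasDerivWithinAt) (fun t ht => by
      have hd : dist (y + t • h) y₀ < δ := by
        have hc := (convex_ball y₀ δ).segment_subset (x := y) (y := y + h)
          (by simpa [dist_eq_norm] using hy) (by simpa [dist_eq_norm] using hyh)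
        have : y + t • h ∈ segment ℝ y (y + h) := by
          rw [segment_eq_image']
          exact ⟨t, ⟨ht.1, ht.2.le⟩, by simp⟩
        exact hc this
      have := h2 _ y hd (by simpa [dist_eq_norm] using hy)
      rw [add_sub_cancel_left] at this
      calc ‖inner ℝ (Dg (y + t • h) - Dg y - H (t • h)) h‖
          ≤ ‖Dg (y + t • h) - Dg y - H (t • h)‖ * ‖h‖ := norm_inner_le_norm _ _
        _ ≤ ε * ‖t • h‖ * ‖h‖ := by gcongr
        _ ≤ ε * ‖h‖ * ‖h‖ := by
          gcongr
          rw [norm_smul, Real.norm_eq_abs, abs_of_nonneg ht.1]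
          nlinarith [norm_nonneg h, ht.2]
        _ = ε * ‖h‖ ^ 2 := by ring)
  rw [Real.norm_eq_abs] at key
  convert key using 2
  simp [θ]
  ring

end basics


section keys
variable {n : ℕ} {g : Euc n → ℝ} {Dg : Euc n → Euc n}

lemma nv_cont (hg2 : ContDiff ℝ 2 g) (hg : ∀ y, HasGradientAt g (Dg y) y) {y : Euc n}
    (h : Dg y ≠ 0) : ContinuousAt (Nv Dg) y := by
  have hc : ContinuousAt Dg y := (dg_contDiff hg2 hg).continuous.continuousAt
  unfold Nv
  exact (hc.norm.inv₀ (norm_ne_zero_iff.2 h)).smul hc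

lemma final_ineq {G Gy η ε τ a b D q q2 C s δ v : ℝ} (hG : 0 < G) (hη : 0 < η)
    (hε : 0 < ε) (hτ : 0 < τ) (ha : 0 ≤ a) (hb : 0 ≤ b) (hC : 0 ≤ C)
    (hA : 0 ≤ G * (1 - η) * τ + 1/2 * q2 + ε * b ^ 2)
    (hB : Gy * τ + 1/2 * q - ε * a ^ 2 ≤ v)
    (hq : -(C * D * (a + b)) ≤ q - q2) (hD : D ≤ ε * a + η * τ) 
    (hba : b ≤ 3 * a) (has : a ^ 2 ≤ 2 * s * τ) (hGy : G - ε ≤ Gy) (had : a ≤ 2 * δ)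
    (hδ : C * δ * 16 ≤ G) (hε2 : ε * (1 + 4 * C * s + 20 * s) ≤ η * G / 4) : 0 < v := by
  have e1 : b ^ 2 ≤ 9 * a ^ 2 := by nlinarith
  have e2 : C * D * (a + b) ≤ C * (ε * a + η * τ) * (4 * a) := by
    have : a + b ≤ 4 * a := by linarith
    gcongr
  have e3 : v ≥ (Gy - G) * τ + η * G * τ + 1/2 * (q - q2) - ε * (a ^ 2 + b ^ 2) := by linarith
  have e4 : (Gy - G) * τ ≥ -ε * τ := by nlinarith
  have e5 : ε * (a ^ 2 + b ^ 2) ≤ ε * (10 * (2 * s * τ)) := by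
    gcongr; linarith
  have e6 : C * (ε * a + η * τ) * (4 * a) ≤ 4 * C * ε * (2 * s * τ) + η * τ * (G / 2) := by
    have f1 : C * ε * a ^ 2 ≤ C * ε * (2 * s * τ) := by gcongr
    have f2 : C * a ≤ G / 8 := by nlinarith
    have f3 : η * τ * (C * a) ≤ η * τ * (G / 8) := by gcongr
    nlinarith
  have e7 : ε * (1 + 4 * C * s + 20 * s) * τ ≤ η * G / 4 * τ := by gcongr
  have e8 : 0 < η * G * τ := by positivity
  nlinarith

set_option maxHeartbeats 1000000 in
lemma local_strict (hg2 : ContDiff ℝ 2 g) (hg : ∀ y, HasGradientAt g (Dg y) y) {y₀ : Euc n}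
    {s s' : ℝ} (hD : Dg y₀ ≠ 0) (hs : 0 < s) (hss : s < s') (hP : Pm g Dg y₀ s') :
    ∃ δ > 0, ∀ y z, ‖y - y₀‖ < δ → ‖z - y₀‖ < δ → Bl Dg y s z → z ≠ y → g y < g z := by
  obtain ⟨H, hH⟩ := expansion hg2 hg y₀
  have hG : 0 < ‖Dg y₀‖ := norm_pos_iff.2 hD
  set G := ‖Dg y₀‖ with hGdef
  set C := ‖H‖ with hCdef
  have hC : 0 ≤ C := norm_nonneg _
  obtain ⟨η, hη, hη1, hη2⟩ : ∃ η : ℝ, 0 < η ∧ η ≤ 1 ∧ (1 + 2 * η) ^ 2 * s ≤ s' * (1 - η) := by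
    have h8 : 0 < 8 * s + s' := by linarith
    have h1 : (s' - s) / (8 * s + s') ≤ 1 := by rw [div_le_one h8]; linarith
    have h0 : 0 < (s' - s) / (8 * s + s') := div_pos (by linarith) h8
    refine ⟨_, h0, h1, ?_⟩
    have h2 : (s' - s) / (8 * s + s') * (8 * s + s') = s' - s := div_mul_cancel₀ _ h8.ne'
    set η := (s' - s) / (8 * s + s')
    have : η ^ 2 ≤ η := by nlinarith
    nlinarith
  have hQ : 0 < 1 + 4 * C * s + 20 * s := by positivity
  obtain ⟨ε, hε, hεη, hε2⟩ : ∃ ε : ℝ, 0 < ε ∧ ε ≤ η ∧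
      ε * (1 + 4 * C * s + 20 * s) ≤ η * G / 4 := by
    refine ⟨min η (η * G / 4 / (1 + 4 * C * s + 20 * s)), lt_min hη (by positivity),
      min_le_left _ _, ?_⟩
    rw [← le_div_iff₀ hQ]
    exact min_le_right _ _
  obtain ⟨δ₂, hδ₂, hexp⟩ := hH ε hε
  have ev : ∀ᶠ y in 𝓝 y₀, ‖Nv Dg y - Nv Dg y₀‖ < ε ∧ G - ε < ‖Dg y‖ ∧ Dg y ≠ 0 := by
    have hc : ContinuousAt Dg y₀ := (dg_contDiff hg2 hg).continuous.continuousAt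
    refine ((Metric.tendsto_nhds.1 (nv_cont hg2 hg hD) ε hε).mono fun y hy => ?_).and
      ((hc.norm.eventually (lt_mem_nhds (by linarith))).and (hc.eventually_ne hD))
    rwa [dist_eq_norm] at hy
  obtain ⟨δ₁, hδ₁, hev⟩ := Metric.eventually_nhds_iff.1 ev
  refine ⟨min δ₁ (min (δ₂ / 10) (G / (16 * (C + 1)))),
    lt_min hδ₁ (lt_min (by positivity) (by positivity)), fun y z hy hz hB hne => ?_⟩
  set δ := min δ₁ (min (δ₂ / 10) (G / (16 * (C + 1)))) with hδdef
  have hδa : δ ≤ δ₁ := min_le_left _ _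
  have hδb : δ ≤ δ₂ / 10 := (min_le_right _ _).trans (min_le_left _ _)
  have hδc : δ ≤ G / (16 * (C + 1)) := (min_le_right _ _).trans (min_le_right _ _)
  have hδ0 : 0 < δ := lt_of_le_of_lt (norm_nonneg _) hy
  have hδC : C * δ * 16 ≤ G := by
    rw [le_div_iff₀ (by positivity)] at hδc
    nlinarith
  obtain ⟨hN, hGy, hDy⟩ := hev (y := y) (by rw [dist_eq_norm]; linarith)
  obtain ⟨h, rfl⟩ : ∃ h, z = y + h := ⟨z - y, by abel⟩
  have hτ := bl_inner_pos hs hB hne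
  unfold Bl at hB
  rw [add_sub_cancel_left] at hτ hB
  set τ : ℝ := inner ℝ h (Nv Dg y) with hτdef
  have hτh : τ ≤ ‖h‖ := by
    have := real_inner_le_norm h (Nv Dg y)
    rwa [nv_norm hDy, mul_one] at this
  have hh : ‖h‖ ≤ 2 * δ := by
    have : h = (y + h - y₀) - (y - y₀) := by abel
    rw [this]
    refine (norm_sub_le _ _).trans ?_
    linarith
  set c : ℝ := inner ℝ h (Nv Dg y - Nv Dg y₀) - η * τ with hcdef
  set h2 : Euc n := h + c • Nv Dg y₀ with hh2
  have hN0 := nv_norm hD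
  have hc : |c| ≤ ε * ‖h‖ + η * τ := by
    have h1 : |inner ℝ h (Nv Dg y - Nv Dg y₀)| ≤ ‖h‖ * ε :=
      (abs_real_inner_le_norm _ _).trans (by gcongr)
    have h3 : |η * τ| = η * τ := abs_of_pos (by positivity)
    calc |c| ≤ _ := abs_sub _ _
      _ ≤ _ := by linarith
  have hdiff : ‖h - h2‖ = |c| := by
    have : h - h2 = -(c • Nv Dg y₀) := by rw [hh2]; abel
    rw [this, norm_neg, norm_smul, hN0, mul_one, Real.norm_eq_abs]
  have hc2 : |c| ≤ 2 * η * ‖h‖ := by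
    have : ε * ‖h‖ ≤ η * ‖h‖ := by gcongr
    have : η * τ ≤ η * ‖h‖ := by gcongr
    linarith
  have hnorm2 : ‖h2‖ ≤ (1 + 2 * η) * ‖h‖ := by
    have : h2 = h - (h - h2) := by abel
    rw [this]
    refine (norm_sub_le _ _).trans ?_
    rw [hdiff]; linarith
  have hnorm3 : ‖h2‖ ≤ 3 * ‖h‖ := hnorm2.trans (by gcongr; linarith)
  have hin2 : inner ℝ h2 (Nv Dg y₀) = (1 - η) * τ := by
    rw [hh2, inner_add_left, real_inner_smul_left, real_inner_self_eq_norm_sq, hN0, hcdef,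
      inner_sub_right]
    ring
  have hBl2 : Bl Dg y₀ s' (y₀ + h2) := by
    unfold Bl
    rw [add_sub_cancel_left, hin2]
    calc ‖h2‖ ^ 2 ≤ ((1 + 2 * η) * ‖h‖) ^ 2 := by gcongr
      _ = (1 + 2 * η) ^ 2 * ‖h‖ ^ 2 := by ring
      _ ≤ (1 + 2 * η) ^ 2 * (2 * s * τ) := by gcongr
      _ = 2 * τ * ((1 + 2 * η) ^ 2 * s) := by ring
      _ ≤ 2 * τ * (s' * (1 - η)) := by gcongr
      _ = _ := by ring
  have hge := hP _ hBl2
  have x1 := hexp y₀ h2 (by simpa using hδ₂) (by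
    rw [add_sub_cancel_left]; linarith)
  have x2 := hexp y h (by linarith) (by linarith)
  rw [inner_dg hD, hin2] at x1
  rw [inner_dg hDy, ← hτdef] at x2
  rw [abs_le] at x1 x2
  have hq : -(C * ‖h - h2‖ * (‖h‖ + ‖h2‖)) ≤ inner ℝ (H h) h - inner ℝ (H h2) h2 := by
    have e : inner ℝ (H h) h - inner ℝ (H h2) h2 =
        inner ℝ (H (h - h2)) h + inner ℝ (H h2) (h - h2) := by
      rw [map_sub, inner_sub_left, inner_sub_right]; ring
    have n1 : |inner ℝ (H (h - h2)) h| ≤ C * ‖h - h2‖ * ‖h‖ :=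
      (abs_real_inner_le_norm _ _).trans (by gcongr; exact H.le_opNorm _)
    have n2 : |inner ℝ (H h2) (h - h2)| ≤ C * ‖h2‖ * ‖h - h2‖ :=
      (abs_real_inner_le_norm _ _).trans (by gcongr; exact H.le_opNorm _)
    rw [abs_le] at n1 n2
    rw [e]
    have e' : C * ‖h - h2‖ * (‖h‖ + ‖h2‖) = C * ‖h - h2‖ * ‖h‖ + C * ‖h2‖ * ‖h - h2‖ := by ring
    rw [e']
    linarith only [n1.1, n2.1]
  have := final_ineq (v := g (y + h) - g y) hG hη hε hτ (norm_nonneg h) (norm_nonneg h2) hC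
    (q := inner ℝ (H h) h) (q2 := inner ℝ (H h2) h2) (Gy := ‖Dg y‖) (D := ‖h - h2‖)
    (δ := δ) (by linarith only [x1.2, hge]) (by linarith only [x2.1]) hq
    (by rw [hdiff]; exact hc) hnorm3 hB hGy.le hh hδC hε2
  linarith

lemma K0 (hg2 : ContDiff ℝ 2 g) (hg : ∀ y, HasGradientAt g (Dg y) y) {y₀ : Euc n}
    (hD : Dg y₀ ≠ 0) : ∃ s > 0, Um g Dg y₀ s := by
  obtain ⟨H, hH⟩ := expansion hg2 hg y₀
  have hG : 0 < ‖Dg y₀‖ := norm_pos_iff.2 hD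
  obtain ⟨δ, hδ, hexp⟩ := hH 1 one_pos
  have hC : 0 ≤ ‖H‖ := norm_nonneg _
  set s := min (δ / 4) (‖Dg y₀‖ / (2 * (‖H‖ + 2))) with hs
  have hs0 : 0 < s := lt_min (by positivity) (by positivity)
  have h1 : s ≤ δ / 4 := min_le_left _ _
  have h2 : s ≤ ‖Dg y₀‖ / (2 * (‖H‖ + 2)) := min_le_right _ _
  rw [le_div_iff₀ (by positivity)] at h2
  refine ⟨s, hs0, fun z hB hne => ?_⟩
  have hτ := bl_inner_pos hs0 hB hne
  have hn := bl_norm_le hD hs0 hB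
  obtain ⟨h, rfl⟩ : ∃ h, z = y₀ + h := ⟨z - y₀, by abel⟩
  unfold Bl at hB
  rw [add_sub_cancel_left] at hτ hB hn
  have x1 := hexp y₀ h (by simpa using hδ) (by rw [add_sub_cancel_left]; linarith)
  rw [inner_dg hD, abs_le] at x1
  have n1 : |inner ℝ (H h) h| ≤ ‖H‖ * ‖h‖ * ‖h‖ :=
      (abs_real_inner_le_norm _ _).trans (by gcongr; exact H.le_opNorm _)
  rw [abs_le] at n1
  set τ : ℝ := inner ℝ h (Nv Dg y₀)
  have e1 : (‖H‖ + 2) * ‖h‖ ^ 2 ≤ (‖H‖ + 2) * (2 * s * τ) := by gcongr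
  have e2 : s * (2 * (‖H‖ + 2)) * τ ≤ ‖Dg y₀‖ * τ := by gcongr
  have e3 : 0 < ‖Dg y₀‖ * τ := by positivity
  nlinarith [x1.1, n1.1]

lemma bl_event_strict (hg2 : ContDiff ℝ 2 g) (hg : ∀ y, HasGradientAt g (Dg y) y) {y₀ : Euc n}
    {s : ℝ} (hD : Dg y₀ ≠ 0) {z : Euc n}
    (hz : ‖z - y₀‖ ^ 2 < 2 * s * inner ℝ (z - y₀) (Nv Dg y₀)) :
    ∀ᶠ y in 𝓝 y₀, Bl Dg y s z := by
  have hN := nv_cont hg2 hg hD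
  have c1 : ContinuousAt (fun y => ‖z - y‖ ^ 2) y₀ := by fun_prop
  have c2 : ContinuousAt (fun y => 2 * s * inner ℝ (z - y) (Nv Dg y)) y₀ :=
    continuousAt_const.mul ((continuousAt_const.sub continuousAt_id).inner hN)
  exact (c1.eventually_lt c2 hz).mono fun y hy => le_of_lt hy

lemma K5 (hg2 : ContDiff ℝ 2 g) (hg : ∀ y, HasGradientAt g (Dg y) y) {y₀ : Euc n}
    {s s' : ℝ} (hD : Dg y₀ ≠ 0) (hs : 0 < s) (hss : s < s') (hU : ¬ Um g Dg y₀ s) :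
    ∀ᶠ y in 𝓝 y₀, g y₀ < g y → ¬ Pm g Dg y s' := by
  unfold Um at hU
  push Not at hU
  obtain ⟨z, hz, hne, hgz⟩ := hU
  filter_upwards [bl_event_strict hg2 hg hD (bl_strict hs hss hz hne)] with y hy hgy hP
  linarith [hP z hy]

lemma K3 (hg2 : ContDiff ℝ 2 g) (hg : ∀ y, HasGradientAt g (Dg y) y) {y₀ : Euc n}
    {s s' : ℝ} (hD : Dg y₀ ≠ 0) (hs : 0 < s) (hss : s < s') (hU : ¬ Pm g Dg y₀ s) :
    ∀ᶠ y in 𝓝 y₀, ¬ Pm g Dg y s' := by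
  unfold Pm at hU
  push Not at hU
  obtain ⟨z, hz, hgz⟩ := hU
  have hne : z ≠ y₀ := by rintro rfl; exact lt_irrefl _ hgz
  filter_upwards [bl_event_strict hg2 hg hD (bl_strict hs hss hz hne),
    (g_cont hg).continuousAt.eventually (lt_mem_nhds hgz)] with y hy hgy hP
  exact absurd (hP z hy) (not_le.2 hgy)

/-- balls based at nearby points are eventually in larger ball, away from `y₀` -/
lemma bl_event (hg2 : ContDiff ℝ 2 g) (hg : ∀ y, HasGradientAt g (Dg y) y) {y₀ : Euc n}
    {s s' δ : ℝ} (hD : Dg y₀ ≠ 0) (hs : 0 < s) (hss : s < s') (hδ : 0 < δ) :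
    ∀ᶠ y in 𝓝 y₀, ∀ z, δ ≤ ‖z - y₀‖ → Bl Dg y s z → Bl Dg y₀ s' z := by
  have hcD : ContinuousAt Dg y₀ := (dg_contDiff hg2 hg).continuous.continuousAt
  have hNc := nv_cont hg2 hg hD
  -- use: quantity ‖z-y₀‖² - 2 s' ⟪z-y₀,N₀⟫ is continuous uniformly on bounded sets
  have hlim : Tendsto (fun y => ‖y - y₀‖) (𝓝 y₀) (𝓝 0) := by
    have : ContinuousAt (fun y => ‖y - y₀‖) y₀ := by fun_prop
    simpa [ContinuousAt] using this
  have hlimN : Tendsto (fun y => ‖Nv Dg y - Nv Dg y₀‖) (𝓝 y₀) (𝓝 0) := by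
    have : ContinuousAt (fun y => ‖Nv Dg y - Nv Dg y₀‖) y₀ := (hNc.sub continuousAt_const).norm
    simpa [ContinuousAt] using this
  obtain ⟨e, he, he1, hee⟩ : ∃ e : ℝ, 0 < e ∧ e ≤ 1 ∧ e * (4 * s + 4 * s ^ 2 + 2 * s + 4 * s + 4) * s' ≤
      (s' - s) * δ ^ 2 := by
    have hq : 0 < (4 * s + 4 * s ^ 2 + 2 * s + 4 * s + 4) * s' := by
      have : 0 < s' := by linarith
      positivity
    refine ⟨min 1 ((s' - s) * δ ^ 2 / ((4 * s + 4 * s ^ 2 + 2 * s + 4 * s + 4) * s')), lt_min one_pos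
      (div_pos (mul_pos (by linarith) (by positivity)) hq), min_le_left _ _, ?_⟩
    rw [mul_assoc, ← le_div_iff₀ hq]
    exact min_le_right _ _
  filter_upwards [hlim.eventually (gt_mem_nhds he), hlimN.eventually (gt_mem_nhds he),
    hcD.eventually_ne hD] with y h1 h2 hDy z hz hB
  have hzn := bl_norm_le hDy hs hB
  unfold Bl at hB ⊢
  have hN0 := nv_norm hD
  have e1 : ‖z - y₀‖ ≤ ‖z - y‖ + ‖y - y₀‖ := by
    have : z - y₀ = (z - y) + (y - y₀) := by abel
    rw [this]; exact norm_add_le _ _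
  have e2 : inner ℝ (z - y₀) (Nv Dg y₀) = inner ℝ (z - y) (Nv Dg y) -
      inner ℝ (z - y) (Nv Dg y - Nv Dg y₀) + inner ℝ (y - y₀) (Nv Dg y₀) := by
    simp only [inner_sub_left, inner_sub_right]; ring
  have e3 : |inner ℝ (z - y) (Nv Dg y - Nv Dg y₀)| ≤ 2 * s * e :=
    (abs_real_inner_le_norm _ _).trans (by gcongr)
  have e4 : |inner ℝ (y - y₀) (Nv Dg y₀)| ≤ e :=
    (abs_real_inner_le_norm _ _).trans (by rw [hN0, mul_one]; exact h1.le)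
  rw [abs_le] at e3 e4
  set P : ℝ := inner ℝ (z - y₀) (Nv Dg y₀)
  set Q : ℝ := inner ℝ (z - y) (Nv Dg y)
  have e5 : Q ≤ P + 2 * s * e + e := by linarith [e3.2, e4.1]
  have e6 : ‖z - y₀‖ ^ 2 ≤ ‖z - y‖ ^ 2 + 4 * s * e + e := by
    have : ‖z - y₀‖ ^ 2 ≤ (‖z - y‖ + ‖y - y₀‖) ^ 2 := by gcongr
    have a1 : ‖z - y‖ * ‖y - y₀‖ ≤ 2 * s * e := by gcongr
    have a2 : ‖y - y₀‖ ^ 2 ≤ e * 1 := by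
      rw [sq]; have := norm_nonneg (y - y₀); nlinarith
    nlinarith
  have e7 : ‖z - y₀‖ ^ 2 ≤ 2 * s * P + e * (4 * s + 4 * s ^ 2 + 2 * s + 1) := by nlinarith
  have e8 : δ ^ 2 ≤ ‖z - y₀‖ ^ 2 := by gcongr
  have hs' : 0 < s' := by linarith
  -- s' * A ≤ 2 s s' P + s' e(...) ; (s'-s) A ≥ (s'-s)δ² ≥ s' e (...)
  have e9 : s' * ‖z - y₀‖ ^ 2 ≤ s' * (2 * s * P + e * (4 * s + 4 * s ^ 2 + 2 * s + 1)) := by gcongr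
  have e10 : (s' - s) * δ ^ 2 ≤ (s' - s) * ‖z - y₀‖ ^ 2 := by
    apply mul_le_mul_of_nonneg_left e8; linarith
  have e11 : 0 ≤ e * s' * (4 * s + 3) := by positivity
  have e12 : s * ‖z - y₀‖ ^ 2 ≤ s * (2 * s' * P) := by nlinarith
  exact le_of_mul_le_mul_left e12 hs

lemma K4 (hg2 : ContDiff ℝ 2 g) (hg : ∀ y, HasGradientAt g (Dg y) y) {y₀ : Euc n}
    {s s' : ℝ} (hD : Dg y₀ ≠ 0) (hs : 0 < s) (hss : s < s') (hP : Pm g Dg y₀ s') :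
    ∀ᶠ y in 𝓝 y₀, g y < g y₀ → Um g Dg y s := by
  obtain ⟨δ, hδ, hloc⟩ := local_strict hg2 hg hD hs hss hP
  filter_upwards [Metric.ball_mem_nhds y₀ hδ, bl_event hg2 hg hD hs hss hδ] with y hy hb hgy z hz hne
  rw [Metric.mem_ball, dist_eq_norm] at hy
  by_cases hc : ‖z - y₀‖ < δ
  · exact hloc y z hy hc hz hne
  · exact hgy.trans_le (hP z (hb z (not_lt.1 hc) hz))

lemma K2 (hg2 : ContDiff ℝ 2 g) (hg : ∀ y, HasGradientAt g (Dg y) y) {y₀ : Euc n}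
    {s s' : ℝ} (hD : Dg y₀ ≠ 0) (hs : 0 < s) (hss : s < s') (hU : Um g Dg y₀ s') :
    ∀ᶠ y in 𝓝 y₀, Um g Dg y s := by
  obtain ⟨δ, hδ, hloc⟩ := local_strict hg2 hg hD hs hss hU.pm
  have hgc := g_cont hg
  have hs' : 0 < s' := hs.trans hss
  have hcomp : IsCompact {z | Bl Dg y₀ s' z ∧ δ ≤ ‖z - y₀‖} := by
    have : {z | Bl Dg y₀ s' z ∧ δ ≤ ‖z - y₀‖} =
        Metric.closedBall (charX Dg y₀ s') s' ∩ {z | δ ≤ ‖z - y₀‖} := by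
      ext z
      simp only [Set.mem_ofPred_eq, Set.mem_inter_iff, Metric.mem_closedBall, dist_eq_norm,
        bl_iff hD hs'.le]
    rw [this]
    exact (isCompact_closedBall _ _).inter_right (isClosed_le (by fun_prop) (by fun_prop))
  have hev : ∀ᶠ y in 𝓝 y₀, ∀ z, Bl Dg y₀ s' z ∧ δ ≤ ‖z - y₀‖ → g y < g z := by
    by_cases hne : {z | Bl Dg y₀ s' z ∧ δ ≤ ‖z - y₀‖}.Nonempty
    · obtain ⟨z₀, hz₀, hmin⟩ := hcomp.exists_isMinOn hne hgc.continuousOn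
      have : g y₀ < g z₀ := hU z₀ hz₀.1 (by
        rintro rfl
        have := hz₀.2
        rw [sub_self, norm_zero] at this
        linarith)
      filter_upwards [hgc.continuousAt.eventually (gt_mem_nhds this)] with y hy z hz
      exact hy.trans_le (hmin hz)
    · exact Eventually.of_forall fun y z hz => absurd ⟨z, hz⟩ hne
  filter_upwards [Metric.ball_mem_nhds y₀ hδ, bl_event hg2 hg hD hs hss hδ, hev]
    with y hy hb hgy z hz hne
  rw [Metric.mem_ball, dist_eq_norm] at hy
  by_cases hc : ‖z - y₀‖ < δ
  · exact hloc y z hy hc hz hne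
  · exact hgy z ⟨hb z (not_lt.1 hc) hz, not_lt.1 hc⟩

end keys


section regulated
open Function

lemma jump_fun (J : Set ℝ) (hJ : J.Countable) : ∃ f : ℝ → ℝ, Monotone f ∧
    (∀ r r', r ≤ r' → r' - r ≤ f r' - f r) ∧ (∀ r, r ≤ f r) ∧ (∀ r, f r ≤ r + 2) ∧
    ∀ r ∈ J, leftLim f r < rightLim f r := by
  obtain ⟨e, he⟩ : ∃ e : ℕ → ℝ, J ⊆ Set.range e := by
    by_cases hne : J.Nonempty
    · obtain ⟨e, he⟩ := hJ.exists_eq_range hne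
      exact ⟨e, he.subset⟩
    · rw [Set.not_nonempty_iff_eq_empty] at hne
      exact ⟨fun _ => 0, by simp [hne]⟩
  let w : ℝ → ℕ → ℝ := fun r k => if e k ≤ r then (1/2 : ℝ) ^ k else 0
  have hw0 : ∀ r k, 0 ≤ w r k := fun r k => by simp only [w]; split_ifs <;> positivity
  have hw1 : ∀ r k, w r k ≤ (1/2 : ℝ) ^ k := fun r k => by
    simp only [w]; split_ifs
    · exact le_rfl
    · positivity
  have hsum : ∀ r, Summable (w r) := fun r =>
    Summable.of_nonneg_of_le (hw0 r) (hw1 r) summable_geometric_two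
  have hwm : ∀ r r', r ≤ r' → ∀ k, w r k ≤ w r' k := fun r r' h k => by
    by_cases h1 : e k ≤ r
    · simp [w, h1, h1.trans h]
    · simp only [w, h1, if_false]; exact hw0 r' k
  have hS : ∀ r r', r ≤ r' → ∑' k, w r k ≤ ∑' k, w r' k := fun r r' h =>
    (hsum r).tsum_le_tsum (hwm r r' h) (hsum r')
  refine ⟨fun r => r + ∑' k, w r k, fun r r' h => add_le_add h (hS r r' h),
    fun r r' h => by have := hS r r' h; dsimp only; linarith,
    fun r => by have : 0 ≤ ∑' k, w r k := tsum_nonneg (hw0 r); dsimp only; linarith, fun r => ?_, fun r hr => ?_⟩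
  · have := (hsum r).tsum_le_tsum (hw1 r) summable_geometric_two
    rw [tsum_geometric_two] at this
    dsimp only; linarith
  · obtain ⟨k, rfl⟩ := he hr
    set f : ℝ → ℝ := fun r => r + ∑' k, w r k with hf
    have hm : Monotone f := fun r r' h => add_le_add h (hS r r' h)
    have h1 : leftLim f (e k) ≤ f (e k) - (1/2) ^ k := by
      refine le_of_tendsto (hm.tendsto_leftLim _) ?_
      filter_upwards [self_mem_nhdsWithin] with r hr
      have hr : r < e k := hr
      have h2 : (∑' j, w (e k) j) - ∑' j, w r j ≥ (1/2) ^ k := by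
        rw [← (hsum (e k)).tsum_sub (hsum r)]
        have h3 : w (e k) k - w r k = (1/2) ^ k := by simp [w, not_le.2 hr]
        rw [ge_iff_le, ← h3]
        exact ((hsum (e k)).sub (hsum r)).le_tsum k
          (fun j _ => sub_nonneg.2 (hwm r (e k) hr.le j))
      simp only [hf]; linarith
    have h2 : f (e k) ≤ rightLim f (e k) := hm.le_rightLim le_rfl
    have h3 : (0:ℝ) < (1/2) ^ k := by positivity
    linarith

lemma reg_path (a b : ℝ → ℝ) (hab : ∀ r ∈ Set.Icc (0:ℝ) 1, a r ≤ b r)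
    (hla : ∀ r ∈ Set.Ioc (0:ℝ) 1, Tendsto a (𝓝[<] r) (𝓝 (b r)))
    (hlb : ∀ r ∈ Set.Ioc (0:ℝ) 1, Tendsto b (𝓝[<] r) (𝓝 (b r)))
    (hra : ∀ r ∈ Set.Ico (0:ℝ) 1, Tendsto a (𝓝[>] r) (𝓝 (a r)))
    (hrb : ∀ r ∈ Set.Ico (0:ℝ) 1, Tendsto b (𝓝[>] r) (𝓝 (a r))) :
    ∃ (s₀ s₁ : ℝ) (ψ h : ℝ → ℝ), s₀ ≤ s₁ ∧ ψ s₀ = 0 ∧ ψ s₁ = 1 ∧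
      ContinuousOn ψ (Set.Icc s₀ s₁) ∧ ContinuousOn h (Set.Icc s₀ s₁) ∧
      ∀ s ∈ Set.Icc s₀ s₁, ψ s ∈ Set.Icc (0:ℝ) 1 ∧ h s ∈ Set.Icc (a (ψ s)) (b (ψ s)) := by
  have hJ : {r ∈ Set.Icc (0:ℝ) 1 | a r < b r}.Countable := by
    let S : ℚ → Set ℝ := fun p => {r ∈ Set.Ico (0:ℝ) 1 | a r < p ∧ (p : ℝ) < b r}
    have hS : ∀ p, (S p).Countable := fun p => by
      have : S p ⊆ {x ∈ S p | 𝓝[S p ∩ Set.Ioi x] x = ⊥} := by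
        intro r hr
        refine ⟨hr, ?_⟩
        have h1 : ∀ᶠ r' in 𝓝[>] r, b r' < p := (hrb r hr.1).eventually (gt_mem_nhds hr.2.1)
        have h2 : ∀ᶠ r' in 𝓝[S p ∩ Set.Ioi r] r, b r' < p :=
          h1.filter_mono (nhdsWithin_mono _ Set.inter_subset_right)
        have h3 : ∀ᶠ r' in 𝓝[S p ∩ Set.Ioi r] r, r' ∈ S p ∩ Set.Ioi r := self_mem_nhdsWithin
        rw [← Filter.empty_mem_iff_bot]
        filter_upwards [h2, h3] with r' ha hb
        exact absurd hb.1.2.2 (not_lt.2 ha.le)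
      exact countable_setOfPred_isolated_right_within.mono this
    refine ((Set.countable_iUnion hS).insert 1).mono ?_
    rintro r ⟨hr, hlt⟩
    by_cases h1 : r = 1
    · exact Or.inl h1
    · obtain ⟨p, hp⟩ := exists_rat_btwn hlt
      exact Or.inr (Set.mem_iUnion.2 ⟨p, ⟨hr.1, lt_of_le_of_ne hr.2 h1⟩, hp⟩)
  obtain ⟨f, hm, hf1, hf2, hf3, hfJ⟩ := jump_fun _ hJ
  set l := leftLim f with hl
  set ρ := rightLim f with hρ
  have hex : ∀ s, ∃ r, l r ≤ s ∧ s ≤ ρ r := by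
    intro s
    have hne : {r | f r ≤ s}.Nonempty := ⟨s - 2, by have := hf3 (s - 2); show f (s-2) ≤ s; linarith⟩
    have hbd : BddAbove {r | f r ≤ s} := ⟨s, fun r (hr : f r ≤ s) => (hf2 r).trans hr⟩
    refine ⟨sSup {r | f r ≤ s}, ?_, ?_⟩
    · refine le_of_tendsto (hm.tendsto_leftLim _) ?_
      filter_upwards [self_mem_nhdsWithin] with r hr
      obtain ⟨r', hr', hlt⟩ := exists_lt_of_lt_csSup hne hr
      exact (hm hlt.le).trans hr'
    · refine ge_of_tendsto (hm.tendsto_rightLim _) ?_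
      filter_upwards [self_mem_nhdsWithin] with r hr
      by_contra hc
      exact absurd (le_csSup hbd (show f r ≤ s from (not_le.1 hc).le)) (not_le.2 hr)
  choose ψ hψl hψr using hex
  have hgap : ∀ r r', r < r' → r' - r ≤ l r' - ρ r := by
    intro r r' hrr
    refine le_of_forall_pos_le_add fun ε hε => ?_
    set d := min (ε / 2) ((r' - r) / 3)
    have hd : 0 < d := lt_min (by positivity) (by linarith)
    have hd1 : d ≤ ε / 2 := min_le_left _ _
    have hd2 : d ≤ (r' - r) / 3 := min_le_right _ _
    have h1 : ρ r ≤ f (r + d) := hm.rightLim_le (by linarith)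
    have h2 : f (r' - d) ≤ l r' := hm.le_leftLim (by linarith)
    have h3 := hf1 (r + d) (r' - d) (by linarith)
    linarith
  have huniq : ∀ s r, l r ≤ s → s ≤ ρ r → ψ s = r := by
    intro s r h1 h2
    rcases lt_trichotomy (ψ s) r with h | h | h
    · have := hgap _ _ h; have := hψr s; linarith
    · exact h
    · have := hgap _ _ h; have := hψl s; linarith
  have hψm : ∀ s s', s ≤ s' → ψ s ≤ ψ s' := by
    intro s s' hs
    by_contra hc
    have := hgap _ _ (not_le.1 hc)
    have := hψr s'; have := hψl s; linarith
  have hψL : ∀ s s', s ≤ s' → ψ s' - ψ s ≤ s' - s := by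
    intro s s' hs
    rcases (hψm s s' hs).eq_or_lt with h | h
    · rw [h]; linarith
    · have := hgap _ _ h; have := hψr s; have := hψl s'; linarith
  have hψc : Continuous ψ := by
    refine (LipschitzWith.of_dist_le_mul (K := 1) fun s s' => ?_).continuous
    rw [NNReal.coe_one, one_mul, Real.dist_eq, Real.dist_eq]
    rcases le_total s s' with h | h
    · have := hψL _ _ h; have := hψm _ _ h
      rw [abs_sub_comm, abs_of_nonneg (by linarith), abs_sub_comm, abs_of_nonneg (by linarith)]
      linarith
    · have := hψL _ _ h; have := hψm _ _ h
      rw [abs_of_nonneg (by linarith), abs_of_nonneg (by linarith)]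
      linarith
  let h : ℝ → ℝ := fun s => b (ψ s) - (s - l (ψ s)) / (ρ (ψ s) - l (ψ s)) * (b (ψ s) - a (ψ s))
  have hlr : ∀ r, l r ≤ f r ∧ f r ≤ ρ r := fun r => ⟨hm.leftLim_le le_rfl, hm.le_rightLim le_rfl⟩
  have h0 : ψ (f 0) = 0 := huniq _ _ (hlr 0).1 (hlr 0).2
  have h1 : ψ (f 1) = 1 := huniq _ _ (hlr 1).1 (hlr 1).2
  have hψ01 : ∀ s ∈ Set.Icc (f 0) (f 1), ψ s ∈ Set.Icc (0:ℝ) 1 := fun s hs =>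
    ⟨by rw [← h0]; exact hψm _ _ hs.1, by rw [← h1]; exact hψm _ _ hs.2⟩
  have hh : ∀ s ∈ Set.Icc (f 0) (f 1), h s ∈ Set.Icc (a (ψ s)) (b (ψ s)) := by
    intro s hs
    have hab' := hab _ (hψ01 s hs)
    have q0 : 0 ≤ (s - l (ψ s)) / (ρ (ψ s) - l (ψ s)) :=
      div_nonneg (by linarith [hψl s]) (by linarith [hlr (ψ s)])
    have q1 : (s - l (ψ s)) / (ρ (ψ s) - l (ψ s)) ≤ 1 :=
      div_le_one_of_le₀ (by linarith [hψr s]) (by linarith [hlr (ψ s)])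
    constructor
    · simp only [h]; nlinarith
    · simp only [h]; nlinarith
  refine ⟨f 0, f 1, ψ, h, hm zero_le_one, h0, h1, hψc.continuousOn, ?_,
    fun s hs => ⟨hψ01 s hs, hh s hs⟩⟩
  intro s hs
  set r := ψ s with hr
  have hr01 := hψ01 s hs
  have hend : ¬ l r < ρ r → a r = b r := fun hc => by
    by_contra hne
    exact hc (hfJ r ⟨hr01, lt_of_le_of_ne (hab r hr01) hne⟩)
  have hIcc : Set.Icc (f 0) (f 1) ⊆
      (Set.Icc (f 0) (f 1) ∩ {x | ψ x = r}) ∪ ((Set.Icc (f 0) (f 1) ∩ {x | ψ x < r}) ∪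
        (Set.Icc (f 0) (f 1) ∩ {x | r < ψ x})) := by
    intro x hx
    rcases lt_trichotomy (ψ x) r with h | h | h
    · exact Or.inr (Or.inl ⟨hx, h⟩)
    · exact Or.inl ⟨hx, h⟩
    · exact Or.inr (Or.inr ⟨hx, h⟩)
  refine ContinuousWithinAt.mono ?_ hIcc
  refine ContinuousWithinAt.union ?_ (ContinuousWithinAt.union ?_ ?_)
  · -- on the fibre
    have hc : Continuous fun x : ℝ => b r - (x - l r) / (ρ r - l r) * (b r - a r) := by fun_prop
    refine hc.continuousWithinAt.congr ?_ ?_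
    · rintro x ⟨-, hx⟩
      have hx : ψ x = r := hx
      simp only [h, hx]
    · simp only [h, ← hr]
  · -- from the left
    by_cases hc : l r < s
    · have hem : 𝓝[Set.Icc (f 0) (f 1) ∩ {x | ψ x < r}] s = ⊥ := by
        rw [← Filter.empty_mem_iff_bot]
        have e1 : ∀ᶠ x in 𝓝[Set.Icc (f 0) (f 1) ∩ {x | ψ x < r}] s, l r < x :=
          mem_nhdsWithin_of_mem_nhds (lt_mem_nhds hc)
        filter_upwards [e1, self_mem_nhdsWithin] with x hx hx2
        have hx2 : ψ x < r := hx2.2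
        have := hgap _ _ hx2; have := hψr x; exfalso; linarith
      rw [ContinuousWithinAt, hem]; exact tendsto_bot
    · have hs1 : s = l r := le_antisymm (not_lt.1 hc) (hψl s)
      have hval : h s = b r := by simp only [h, ← hr]; rw [hs1]; simp
      by_cases hr0 : 0 < r
      · have ht : Tendsto ψ (𝓝[Set.Icc (f 0) (f 1) ∩ {x | ψ x < r}] s) (𝓝[<] r) := by
          refine tendsto_nhdsWithin_iff.2 ⟨(hψc.tendsto s).mono_left nhdsWithin_le_nhds, ?_⟩
          filter_upwards [self_mem_nhdsWithin] with x hx using hx.2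
        rw [ContinuousWithinAt, hval]
        refine tendsto_of_tendsto_of_tendsto_of_le_of_le' ((hla r ⟨hr0, hr01.2⟩).comp ht)
          ((hlb r ⟨hr0, hr01.2⟩).comp ht) ?_ ?_
        · filter_upwards [self_mem_nhdsWithin] with x hx using (hh x hx.1).1
        · filter_upwards [self_mem_nhdsWithin] with x hx using (hh x hx.1).2
      · have : Set.Icc (f 0) (f 1) ∩ {x | ψ x < r} = ∅ := by
          ext x
          simp only [Set.mem_inter_iff, Set.mem_empty_iff_false, iff_false, not_and]
          intro hx hx2
          have hx2 : ψ x < r := hx2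
          have := (hψ01 x hx).1
          linarith
        rw [this]; simp [ContinuousWithinAt]
  · -- from the right
    by_cases hc : s < ρ r
    · have hem : 𝓝[Set.Icc (f 0) (f 1) ∩ {x | r < ψ x}] s = ⊥ := by
        rw [← Filter.empty_mem_iff_bot]
        have e1 : ∀ᶠ x in 𝓝[Set.Icc (f 0) (f 1) ∩ {x | r < ψ x}] s, x < ρ r :=
          mem_nhdsWithin_of_mem_nhds (gt_mem_nhds hc)
        filter_upwards [e1, self_mem_nhdsWithin] with x hx hx2
        have hx2 : r < ψ x := hx2.2
        have := hgap _ _ hx2; have := hψl x; exfalso; linarith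
      rw [ContinuousWithinAt, hem]; exact tendsto_bot
    · have hs1 : s = ρ r := le_antisymm (hψr s) (not_lt.1 hc)
      have hval : h s = a r := by
        simp only [h, ← hr]
        by_cases hj : l r < ρ r
        · rw [hs1, div_self (by linarith)]; ring
        · rw [hend hj]; ring
      by_cases hr0 : r < 1
      · have ht : Tendsto ψ (𝓝[Set.Icc (f 0) (f 1) ∩ {x | r < ψ x}] s) (𝓝[>] r) := by
          refine tendsto_nhdsWithin_iff.2 ⟨(hψc.tendsto s).mono_left nhdsWithin_le_nhds, ?_⟩
          filter_upwards [self_mem_nhdsWithin] with x hx using hx.2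
        rw [ContinuousWithinAt, hval]
        refine tendsto_of_tendsto_of_tendsto_of_le_of_le' ((hra r ⟨hr01.1, hr0⟩).comp ht)
          ((hrb r ⟨hr01.1, hr0⟩).comp ht) ?_ ?_
        · filter_upwards [self_mem_nhdsWithin] with x hx using (hh x hx.1).1
        · filter_upwards [self_mem_nhdsWithin] with x hx using (hh x hx.1).2
      · have : Set.Icc (f 0) (f 1) ∩ {x | r < ψ x} = ∅ := by
          ext x
          simp only [Set.mem_inter_iff, Set.mem_empty_iff_false, iff_false, not_and]
          intro hx hx2
          have hx2 : r < ψ x := hx2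
          have := (hψ01 x hx).2
          linarith
        rw [this]; simp [ContinuousWithinAt]

end regulated


def Aset {n : ℕ} (g : Euc n → ℝ) (Dg : Euc n → Euc n) : Set (Euc n × ℝ) :=
  {p | Dg p.1 ≠ 0 ∧ 0 < p.2 ∧ Pm g Dg p.1 p.2 ∧ ∀ s, p.2 < s → ¬ Um g Dg p.1 s}

def ta {n : ℕ} (g : Euc n → ℝ) (Dg : Euc n → Euc n) (y : Euc n) : ℝ :=
  sSup {s | 0 < s ∧ Um g Dg y s}

def tb {n : ℕ} (g : Euc n → ℝ) (Dg : Euc n → Euc n) (y : Euc n) : ℝ :=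
  sSup {s | 0 < s ∧ Pm g Dg y s}

def InM {n : ℕ} (g : Euc n → ℝ) (Dg : Euc n → Euc n) (y : Euc n) : Prop :=
  Dg y ≠ 0 ∧ ∃ T, 0 < T ∧ ¬ Um g Dg y T

def InE {n : ℕ} (g : Euc n → ℝ) (Dg : Euc n → Euc n) (y : Euc n) : Prop :=
  Dg y ≠ 0 ∧ ∃ T, 0 < T ∧ ¬ Pm g Dg y T

section paths
variable {n : ℕ} {g : Euc n → ℝ} {Dg : Euc n → Euc n}

lemma InE.inM {y : Euc n} (h : InE g Dg y) : InM g Dg y :=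
  ⟨h.1, h.2.imp fun _ hT => ⟨hT.1, fun hU => hT.2 hU.pm⟩⟩

lemma um_ub {y : Euc n} {T : ℝ} (hT : 0 < T) (h : ¬ Um g Dg y T) {s : ℝ}
    (hs : Um g Dg y s) : s ≤ T := by
  by_contra hc
  exact h (hs.mono hT (not_le.1 hc).le)

lemma pm_ub {y : Euc n} {T : ℝ} (hT : 0 < T) (h : ¬ Pm g Dg y T) {s : ℝ}
    (hs : Pm g Dg y s) : s ≤ T := by
  by_contra hc
  exact h (hs.mono hT (not_le.1 hc).le)

lemma le_ta {y : Euc n} (h : InM g Dg y) {s : ℝ} (hs : 0 < s) (hU : Um g Dg y s) :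
    s ≤ ta g Dg y := by
  obtain ⟨-, T, hT, hn⟩ := h
  exact le_csSup ⟨T, fun s hs => um_ub hT hn hs.2⟩ ⟨hs, hU⟩

lemma le_tb {y : Euc n} (h : InE g Dg y) {s : ℝ} (hs : 0 < s) (hU : Pm g Dg y s) :
    s ≤ tb g Dg y := by
  obtain ⟨-, T, hT, hn⟩ := h
  exact le_csSup ⟨T, fun s hs => pm_ub hT hn hs.2⟩ ⟨hs, hU⟩

variable (hg2 : ContDiff ℝ 2 g) (hg : ∀ y, HasGradientAt g (Dg y) y)
include hg2 hg

lemma ta_le {y : Euc n} (h : Dg y ≠ 0) {s : ℝ} (hs : 0 < s) (hU : ¬ Um g Dg y s) :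
    ta g Dg y ≤ s := by
  obtain ⟨s', hs', h'⟩ := K0 hg2 hg h
  exact csSup_le ⟨s', hs', h'⟩ fun r hr => um_ub hs hU hr.2

lemma tb_le {y : Euc n} (h : Dg y ≠ 0) {s : ℝ} (hs : 0 < s) (hU : ¬ Pm g Dg y s) :
    tb g Dg y ≤ s := by
  obtain ⟨s', hs', h'⟩ := K0 hg2 hg h
  exact csSup_le ⟨s', hs', h'.pm⟩ fun r hr => pm_ub hs hU hr.2

lemma ta_pos {y : Euc n} (h : InM g Dg y) : 0 < ta g Dg y := by
  obtain ⟨s', hs', h'⟩ := K0 hg2 hg h.1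
  exact lt_of_lt_of_le hs' (le_ta h hs' h')

lemma um_of_lt {y : Euc n} (h : Dg y ≠ 0) {s : ℝ} (hs : 0 < s) (hlt : s < ta g Dg y) :
    Um g Dg y s := by
  by_contra hc
  exact absurd (ta_le hg2 hg h hs hc) (not_le.2 hlt)

lemma pm_of_lt {y : Euc n} (h : Dg y ≠ 0) {s : ℝ} (hs : 0 < s) (hlt : s < tb g Dg y) :
    Pm g Dg y s := by
  by_contra hc
  exact absurd (tb_le hg2 hg h hs hc) (not_le.2 hlt)

lemma ta_le_tb {y : Euc n} (h : InE g Dg y) : ta g Dg y ≤ tb g Dg y := by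
  refine le_of_forall_lt_imp_le_of_dense fun s hs => ?_
  rcases le_or_gt s 0 with h0 | h0
  · obtain ⟨s', hs', h'⟩ := K0 hg2 hg h.1
    exact h0.trans (hs'.le.trans (le_tb h hs' h'.pm))
  · exact le_tb h h0 (um_of_lt hg2 hg h.1 h0 hs).pm

lemma mem_A_ta {y : Euc n} (h : InM g Dg y) : (y, ta g Dg y) ∈ Aset g Dg := by
  have hp := ta_pos hg2 hg h
  refine ⟨h.1, hp, Pm_closed hg hp fun s hs hlt => (um_of_lt hg2 hg h.1 hs hlt).pm, ?_⟩
  intro s hs hU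
  exact absurd (le_ta h (hp.trans hs) hU) (not_le.2 hs)

lemma mem_A {y : Euc n} (h : InE g Dg y) {t : ℝ} (h1 : ta g Dg y ≤ t) (h2 : t ≤ tb g Dg y) :
    (y, t) ∈ Aset g Dg := by
  have hp := (ta_pos hg2 hg h.inM).trans_le h1
  refine ⟨h.1, hp, Pm_closed hg hp fun s hs hlt =>
    (pm_of_lt hg2 hg h.1 hs (hlt.trans_le h2)), ?_⟩
  intro s hs hU
  have := le_ta h.inM (hp.trans hs) hU
  have hs : t < s := hs
  linarith

omit hg2 hg in
lemma fiber_joined {y : Euc n} {t t' : ℝ} (h : (y, t) ∈ Aset g Dg) (h' : (y, t') ∈ Aset g Dg) :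
    JoinedIn (Aset g Dg) (y, t) (y, t') := by
  wlog htt : t ≤ t' generalizing t t'
  · exact (this h' h (le_of_not_ge htt)).symm
  have hpc : IsPathConnected ((fun r : ℝ => (y, r)) '' Set.Icc t t') :=
    ((convex_Icc t t').isPathConnected ⟨t, le_rfl, htt⟩).image (by fun_prop)
  refine (hpc.joinedIn _ ⟨t, ⟨le_rfl, htt⟩, rfl⟩ _ ⟨t', ⟨htt, le_rfl⟩, rfl⟩).mono ?_
  rintro _ ⟨r, hr, rfl⟩
  have h0 : 0 < r := lt_of_lt_of_le h.2.1 hr.1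
  exact ⟨h.1, h0, h'.2.2.1.mono h0 hr.2, fun s hs => h.2.2.2 s (lt_of_le_of_lt hr.1 hs)⟩

lemma lim1 {y₀ : Euc n} (h : InE g Dg y₀) {c : ℝ} (hc : c < tb g Dg y₀) :
    ∀ᶠ y in 𝓝 y₀, g y < g y₀ → InM g Dg y → c < ta g Dg y := by
  have hb : 0 < tb g Dg y₀ := (ta_pos hg2 hg h.inM).trans_le (ta_le_tb hg2 hg h)
  obtain ⟨s, hs, hs2⟩ := exists_between (max_lt hc hb)
  obtain ⟨s', hs', hs2'⟩ := exists_between hs2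
  have h0 : 0 < s := (le_max_right _ _).trans_lt hs
  filter_upwards [K4 hg2 hg h.1 h0 hs' (pm_of_lt hg2 hg h.1 (h0.trans hs') hs2')] with y hy h1 h2
  exact ((le_max_left _ _).trans_lt hs).trans_le (le_ta h2 h0 (hy h1))

lemma lim2 {y₀ : Euc n} (h : InE g Dg y₀) {c : ℝ} (hc : tb g Dg y₀ < c) :
    ∀ᶠ y in 𝓝 y₀, Dg y ≠ 0 → tb g Dg y < c := by
  have hb : 0 < tb g Dg y₀ := (ta_pos hg2 hg h.inM).trans_le (ta_le_tb hg2 hg h)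
  obtain ⟨s', hs, hs2⟩ := exists_between hc
  obtain ⟨s, hs', hs2'⟩ := exists_between hs
  have h0 : 0 < s := hb.trans hs'
  filter_upwards [K3 hg2 hg h.1 h0 hs2' (fun hP => absurd (le_tb h h0 hP) (not_le.2 hs'))]
    with y hy h1
  exact (tb_le hg2 hg h1 (h0.trans hs2') hy).trans_lt hs2

lemma lim3 {y₀ : Euc n} (h : InM g Dg y₀) {c : ℝ} (hc : c < ta g Dg y₀) :
    ∀ᶠ y in 𝓝 y₀, InM g Dg y → c < ta g Dg y := by
  have hb : 0 < ta g Dg y₀ := ta_pos hg2 hg h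
  obtain ⟨s, hs, hs2⟩ := exists_between (max_lt hc hb)
  obtain ⟨s', hs', hs2'⟩ := exists_between hs2
  have h0 : 0 < s := (le_max_right _ _).trans_lt hs
  filter_upwards [K2 hg2 hg h.1 h0 hs' (um_of_lt hg2 hg h.1 (h0.trans hs') hs2')] with y hy h2
  exact ((le_max_left _ _).trans_lt hs).trans_le (le_ta h2 h0 hy)

lemma lim4 {y₀ : Euc n} (h : InM g Dg y₀) {c : ℝ} (hc : ta g Dg y₀ < c) :
    ∀ᶠ y in 𝓝 y₀, g y₀ < g y → Dg y ≠ 0 → tb g Dg y < c := by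
  have hb : 0 < ta g Dg y₀ := ta_pos hg2 hg h
  obtain ⟨s', hs, hs2⟩ := exists_between hc
  obtain ⟨s, hs', hs2'⟩ := exists_between hs
  have h0 : 0 < s := hb.trans hs'
  filter_upwards [K5 hg2 hg h.1 h0 hs2' (fun hP => absurd (le_ta h h0 hP) (not_le.2 hs'))]
    with y hy h1 h2
  exact (tb_le hg2 hg h2 (h0.trans hs2') (hy h1)).trans_lt hs2

lemma seg_joined {y w : Euc n}
    (hmono : StrictMonoOn (fun r : ℝ => g (y + r • w)) (Set.Icc 0 1))
    (hE : ∀ r ∈ Set.Ioc (0:ℝ) 1, InE g Dg (y + r • w)) (hM : InM g Dg y) :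
    JoinedIn (Aset g Dg) (y, ta g Dg y) (y + w, ta g Dg (y + w)) := by
  let γ : ℝ → Euc n := fun r => y + r • w
  have hγc : Continuous γ := by fun_prop
  have hγ0 : γ 0 = y := by simp [γ]
  have hγ1 : γ 1 = y + w := by simp [γ]
  have hMr : ∀ r ∈ Set.Icc (0:ℝ) 1, InM g Dg (γ r) := by
    intro r hr
    rcases hr.1.eq_or_lt with h | h
    · rw [← h, hγ0]; exact hM
    · exact (hE r ⟨h, hr.2⟩).inM
  let a : ℝ → ℝ := fun r => ta g Dg (γ r)
  let b : ℝ → ℝ := fun r => if r = 0 then ta g Dg (γ r) else tb g Dg (γ r)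
  have hb : ∀ r ∈ Set.Ioc (0:ℝ) 1, b r = tb g Dg (γ r) := fun r hr => if_neg hr.1.ne'
  have hab : ∀ r ∈ Set.Icc (0:ℝ) 1, a r ≤ b r := by
    intro r hr
    rcases hr.1.eq_or_lt with h | h
    · simp [a, b, ← h]
    · rw [hb r ⟨h, hr.2⟩]; exact ta_le_tb hg2 hg (hE r ⟨h, hr.2⟩)
  have hleft : ∀ r ∈ Set.Ioc (0:ℝ) 1, (∀ c < b r, ∀ᶠ x in 𝓝[<] r, c < a x) ∧
      (∀ c > b r, ∀ᶠ x in 𝓝[<] r, b x < c) ∧ ∀ᶠ x in 𝓝[<] r, a x ≤ b x := by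
    intro r hr
    have hm : ∀ᶠ x in 𝓝[<] r, x ∈ Set.Ioo 0 r := Ioo_mem_nhdsLT hr.1
    have ht : Tendsto γ (𝓝[<] r) (𝓝 (γ r)) := (hγc.tendsto r).mono_left nhdsWithin_le_nhds
    rw [hb r hr]
    refine ⟨fun c hc => ?_, fun c hc => ?_, ?_⟩
    · filter_upwards [hm, ht.eventually (lim1 hg2 hg (hE r hr) hc)] with x hx h
      exact h (hmono ⟨hx.1.le, hx.2.le.trans hr.2⟩ ⟨hr.1.le, hr.2⟩ hx.2)
        (hMr x ⟨hx.1.le, hx.2.le.trans hr.2⟩)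
    · filter_upwards [hm, ht.eventually (lim2 hg2 hg (hE r hr) hc)] with x hx h
      rw [hb x ⟨hx.1, hx.2.le.trans hr.2⟩]
      exact h (hMr x ⟨hx.1.le, hx.2.le.trans hr.2⟩).1
    · filter_upwards [hm] with x hx using hab x ⟨hx.1.le, hx.2.le.trans hr.2⟩
  have hright : ∀ r ∈ Set.Ico (0:ℝ) 1, (∀ c < a r, ∀ᶠ x in 𝓝[>] r, c < a x) ∧
      (∀ c > a r, ∀ᶠ x in 𝓝[>] r, b x < c) ∧ ∀ᶠ x in 𝓝[>] r, a x ≤ b x := by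
    intro r hr
    have hm : ∀ᶠ x in 𝓝[>] r, x ∈ Set.Ioo r 1 := Ioo_mem_nhdsGT hr.2
    have ht : Tendsto γ (𝓝[>] r) (𝓝 (γ r)) := (hγc.tendsto r).mono_left nhdsWithin_le_nhds
    have hMr' := hMr r ⟨hr.1, hr.2.le⟩
    refine ⟨fun c hc => ?_, fun c hc => ?_, ?_⟩
    · filter_upwards [hm, ht.eventually (lim3 hg2 hg hMr' hc)] with x hx h
      exact h (hMr x ⟨hr.1.trans hx.1.le, hx.2.le⟩)
    · filter_upwards [hm, ht.eventually (lim4 hg2 hg hMr' hc)] with x hx h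
      rw [hb x ⟨hr.1.trans_lt hx.1, hx.2.le⟩]
      exact h (hmono ⟨hr.1, hr.2.le⟩ ⟨hr.1.trans hx.1.le, hx.2.le⟩ hx.1)
        (hMr x ⟨hr.1.trans hx.1.le, hx.2.le⟩).1
    · filter_upwards [hm] with x hx using hab x ⟨hr.1.trans hx.1.le, hx.2.le⟩
  obtain ⟨s₀, s₁, ψ, h, hs, hψ0, hψ1, hψc, hhc, hmem⟩ := reg_path a b hab
    (fun r hr => tendsto_order.2 ⟨(hleft r hr).1, fun c hc => by
      filter_upwards [(hleft r hr).2.1 c hc, (hleft r hr).2.2] with x h1 h2 using h2.trans_lt h1⟩)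
    (fun r hr => tendsto_order.2 ⟨fun c hc => by
      filter_upwards [(hleft r hr).1 c hc, (hleft r hr).2.2] with x h1 h2 using h1.trans_le h2,
      (hleft r hr).2.1⟩)
    (fun r hr => tendsto_order.2 ⟨(hright r hr).1, fun c hc => by
      filter_upwards [(hright r hr).2.1 c hc, (hright r hr).2.2] with x h1 h2 using h2.trans_lt h1⟩)
    (fun r hr => tendsto_order.2 ⟨fun c hc => by
      filter_upwards [(hright r hr).1 c hc, (hright r hr).2.2] with x h1 h2 using h1.trans_le h2,
      (hright r hr).2.1⟩)
  have hA : ∀ s ∈ Set.Icc s₀ s₁, (γ (ψ s), h s) ∈ Aset g Dg := by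
    intro s hs'
    obtain ⟨h01, hin⟩ := hmem s hs'
    rcases h01.1.eq_or_lt with h0 | h0
    · have : h s = ta g Dg (γ (ψ s)) := by
        simp only [b, a, ← h0, if_true, Set.Icc_self, Set.mem_singleton_iff] at hin ⊢
        exact hin
      rw [this]
      exact mem_A_ta hg2 hg (hMr _ h01)
    · rw [hb _ ⟨h0, h01.2⟩] at hin
      exact mem_A hg2 hg (hE _ ⟨h0, h01.2⟩) hin.1 hin.2
  have hpc : IsPathConnected ((fun s : ℝ => (γ (ψ s), h s)) '' Set.Icc s₀ s₁) :=
    ((convex_Icc s₀ s₁).isPathConnected ⟨s₀, le_rfl, hs⟩).image'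
      ((hγc.comp_continuousOn hψc).prodMk hhc)
  have hj := (hpc.joinedIn _ ⟨s₀, ⟨le_rfl, hs⟩, rfl⟩ _ ⟨s₁, ⟨hs, le_rfl⟩, rfl⟩).mono
    (V := Aset g Dg) (by rintro _ ⟨s, hs, rfl⟩; exact hA s hs)
  have m0 := hA s₀ ⟨le_rfl, hs⟩
  have m1 := hA s₁ ⟨hs, le_rfl⟩
  simp only [hψ0, hψ1, hγ0, hγ1] at hj m0 m1
  have hM1 : InM g Dg (y + w) := by rw [← hγ1]; exact hMr 1 ⟨zero_le_one, le_rfl⟩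
  exact ((fiber_joined (mem_A_ta hg2 hg hM) m0).trans hj).trans
    (fiber_joined m1 (mem_A_ta hg2 hg hM1))

omit hg2 in
lemma seg_mono {y w : Euc n} (h : ∀ r ∈ Set.Icc (0:ℝ) 1, 0 < inner ℝ (Dg (y + r • w)) w) :
    StrictMonoOn (fun r : ℝ => g (y + r • w)) (Set.Icc 0 1) := by
  have hd : ∀ t : ℝ, HasDerivAt (fun t : ℝ => g (y + t • w)) (inner ℝ (Dg (y + t • w)) w) t := by
    intro t
    have a1 : HasDerivAt (fun t : ℝ => y + t • w) w t := by
      simpa using ((hasDerivAt_id t).smul_const w).const_add y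
    exact ((hg (y + t • w)).hasFDerivAt.comp_hasDerivAt t a1).congr_deriv (by simp)
  refine strictMonoOn_of_deriv_pos (convex_Icc 0 1)
    (fun t _ => (hd t).continuousAt.continuousWithinAt) fun t ht => ?_
  rw [interior_Icc] at ht
  rw [(hd t).deriv]
  exact h t ⟨ht.1.le, ht.2.le⟩

/-- directional monotonicity near a regular point -/
lemma dir_pos {y₀ : Euc n} (hD : Dg y₀ ≠ 0) : ∃ ρ₀ > 0, ∀ ρ, 0 < ρ → ρ ≤ ρ₀ →
    ∀ y, ‖y - y₀‖ < ρ / 8 → ∀ r ∈ Set.Icc (0:ℝ) 1,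
      ‖y + r • (y₀ + (ρ / 2) • Nv Dg y₀ - y) - y₀‖ < ρ ∧
      0 < inner ℝ (Dg (y + r • (y₀ + (ρ / 2) • Nv Dg y₀ - y))) (y₀ + (ρ / 2) • Nv Dg y₀ - y) := by
  have hG : 0 < ‖Dg y₀‖ := norm_pos_iff.2 hD
  have hcD : ContinuousAt Dg y₀ := (dg_contDiff hg2 hg).continuous.continuousAt
  obtain ⟨ρ₀, hρ₀, hcl⟩ := Metric.continuousAt_iff.1 hcD (‖Dg y₀‖ / 4) (by positivity)
  refine ⟨ρ₀, hρ₀, fun ρ hρ hle y hy r hr => ?_⟩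
  set w := y₀ + (ρ / 2) • Nv Dg y₀ - y with hw
  have hN := nv_norm hD
  have hy' : ‖y₀ - y‖ < ρ / 8 := by rwa [norm_sub_rev]
  have hwn : ‖w‖ ≤ 5 * ρ / 8 := by
    have : w = (ρ / 2) • Nv Dg y₀ + (y₀ - y) := by rw [hw]; abel
    rw [this]
    refine (norm_add_le _ _).trans ?_
    rw [norm_smul, hN, Real.norm_eq_abs, abs_of_pos (by positivity)]
    linarith
  have h1 : ‖y + r • w - y₀‖ < ρ := by
    have : y + r • w - y₀ = (y - y₀) + r • w := by abel
    rw [this]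
    refine (norm_add_le _ _).trans_lt ?_
    rw [norm_smul, Real.norm_eq_abs, abs_of_nonneg hr.1]
    have : r * ‖w‖ ≤ 1 * ‖w‖ := by gcongr; exact hr.2
    linarith
  refine ⟨h1, ?_⟩
  have h2 := hcl (x := y + r • w) (by rw [dist_eq_norm]; linarith)
  rw [dist_eq_norm] at h2
  have e : inner ℝ (Dg (y + r • w)) w = inner ℝ (Dg y₀) w +
      inner ℝ (Dg (y + r • w) - Dg y₀) w := by rw [inner_sub_left]; ring
  have h3 : |inner ℝ (Dg (y + r • w) - Dg y₀) w| ≤ ‖Dg y₀‖ / 4 * (5 * ρ / 8) :=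
    (abs_real_inner_le_norm _ _).trans (by gcongr)
  have h4 : inner ℝ (Dg y₀) w = ‖Dg y₀‖ * (ρ / 2) + inner ℝ (Dg y₀) (y₀ - y) := by
    have : w = (ρ / 2) • Nv Dg y₀ + (y₀ - y) := by rw [hw]; abel
    rw [this, inner_add_right, inner_dg hD, real_inner_smul_left, real_inner_self_eq_norm_sq, hN]
    ring
  have h5 : |inner ℝ (Dg y₀) (y₀ - y)| ≤ ‖Dg y₀‖ * (ρ / 8) :=
    (abs_real_inner_le_norm _ _).trans (by gcongr)
  rw [abs_le] at h3 h5
  rw [e, h4]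
  have : 0 < ‖Dg y₀‖ * ρ := by positivity
  nlinarith [h3.1, h5.1]

lemma E_local {y₀ : Euc n} (h : InE g Dg y₀) : ∃ c, ∀ᶠ y in 𝓝 y₀,
    JoinedIn (Aset g Dg) (y, ta g Dg y) c := by
  obtain ⟨ρ₀, hρ₀, hdir⟩ := dir_pos hg2 hg h.1
  have hE : ∀ᶠ y in 𝓝 y₀, InE g Dg y := by
    obtain ⟨hD, T, hT, hP⟩ := h
    have hcD : ContinuousAt Dg y₀ := (dg_contDiff hg2 hg).continuous.continuousAt
    filter_upwards [K3 hg2 hg hD hT (lt_add_one T) hP, hcD.eventually_ne hD] with y h1 h2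
    exact ⟨h2, T + 1, by linarith, h1⟩
  obtain ⟨ρ₁, hρ₁, hE1⟩ := Metric.eventually_nhds_iff.1 hE
  set ρ := min ρ₀ ρ₁
  have hρ : 0 < ρ := lt_min hρ₀ hρ₁
  refine ⟨(y₀ + (ρ / 2) • Nv Dg y₀, ta g Dg (y₀ + (ρ / 2) • Nv Dg y₀)), ?_⟩
  filter_upwards [Metric.ball_mem_nhds y₀ (show 0 < ρ / 8 by positivity)] with y hy
  rw [Metric.mem_ball, dist_eq_norm] at hy
  have hd := hdir ρ hρ (min_le_left _ _) y hy
  have := seg_joined hg2 hg (y := y) (w := y₀ + (ρ / 2) • Nv Dg y₀ - y)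
    (seg_mono hg fun r hr => (hd r hr).2)
    (fun r hr => hE1 (by
      rw [dist_eq_norm]
      exact (hd r ⟨hr.1.le, hr.2⟩).1.trans_le (min_le_right _ _)))
    (hE1 (by rw [dist_eq_norm]; have : ρ ≤ ρ₁ := min_le_right _ _; linarith)).inM
  rwa [add_sub_cancel] at this

lemma M_to_E {y₀ : Euc n} (h : InM g Dg y₀) : ∃ y, InE g Dg y ∧
    JoinedIn (Aset g Dg) (y₀, ta g Dg y₀) (y, ta g Dg y) := by
  obtain ⟨ρ₀, hρ₀, hdir⟩ := dir_pos hg2 hg h.1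
  have hE : ∀ᶠ y in 𝓝 y₀, g y₀ < g y → InE g Dg y := by
    obtain ⟨hD, T, hT, hP⟩ := h
    have hcD : ContinuousAt Dg y₀ := (dg_contDiff hg2 hg).continuous.continuousAt
    filter_upwards [K5 hg2 hg hD hT (lt_add_one T) hP, hcD.eventually_ne hD] with y h1 h2 h3
    exact ⟨h2, T + 1, by linarith, h1 h3⟩
  obtain ⟨ρ₁, hρ₁, hE1⟩ := Metric.eventually_nhds_iff.1 hE
  set ρ := min ρ₀ ρ₁
  have hρ : 0 < ρ := lt_min hρ₀ hρ₁
  have hd := hdir ρ hρ (min_le_left _ _) y₀ (by simpa using hρ)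
  set w := y₀ + (ρ / 2) • Nv Dg y₀ - y₀
  have hmono := seg_mono hg fun r hr => (hd r hr).2
  have hEr : ∀ r ∈ Set.Ioc (0:ℝ) 1, InE g Dg (y₀ + r • w) := fun r hr => by
    refine hE1 (by
      rw [dist_eq_norm]
      exact (hd r ⟨hr.1.le, hr.2⟩).1.trans_le (min_le_right _ _)) ?_
    have := hmono ⟨le_rfl, zero_le_one⟩ ⟨hr.1.le, hr.2⟩ hr.1
    simpa using this
  have e1 := hEr 1 ⟨one_pos, le_rfl⟩
  rw [one_smul] at e1
  exact ⟨y₀ + w, e1, seg_joined hg2 hg hmono hEr h⟩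

lemma A_countable : ∃ D : Set (Euc n × ℝ), D.Countable ∧
    ∀ p ∈ Aset g Dg, ∃ c ∈ D, JoinedIn (Aset g Dg) p c := by
  have hloc : ∀ y, ∃ c, InE g Dg y → ∀ᶠ z in 𝓝 y, JoinedIn (Aset g Dg) (z, ta g Dg z) c := by
    intro y
    by_cases h : InE g Dg y
    · obtain ⟨c, hc⟩ := E_local hg2 hg h
      exact ⟨c, fun _ => hc⟩
    · exact ⟨(y, 0), fun h' => absurd h' h⟩
  choose c hc using hloc
  obtain ⟨t, -, htc, hcov⟩ := TopologicalSpace.countable_cover_nhdsWithin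
    (s := {y | InE g Dg y})
    (f := fun y => {z | JoinedIn (Aset g Dg) (z, ta g Dg z) (c y)})
    (fun y hy => mem_nhdsWithin_of_mem_nhds (hc y hy))
  refine ⟨c '' t, htc.image c, ?_⟩
  rintro ⟨y, s⟩ hp
  have hM : InM g Dg y := ⟨hp.1, s + 1, by have := hp.2.1; dsimp only at this; linarith,
    hp.2.2.2 (s + 1) (lt_add_one s)⟩
  obtain ⟨z, hz, hj⟩ := M_to_E hg2 hg hM
  obtain ⟨d, hd, hzd⟩ := Set.mem_iUnion₂.1 (hcov hz)
  exact ⟨c d, ⟨d, hd, rfl⟩, ((fiber_joined hp (mem_A_ta hg2 hg hM)).trans hj).trans hzd⟩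

end paths


section hopflax
variable {n : ℕ} {g : Euc n → ℝ} {Dg : Euc n → Euc n}

lemma hlu_least (hg : ∀ y, HasGradientAt g (Dg y) y) (x : Euc n) {t : ℝ} (ht : 0 ≤ t) :
    IsLeast (g '' Metric.closedBall x t) (HLu g x t) := by
  refine ((isCompact_closedBall x t).image (g_cont hg)).isLeast_sInf ?_
  exact ⟨g x, x, Metric.mem_closedBall_self ht, rfl⟩

lemma hlu_le (hg : ∀ y, HasGradientAt g (Dg y) y) {x : Euc n} {t : ℝ} {z : Euc n}
    (hz : ‖z - x‖ ≤ t) : HLu g x t ≤ g z :=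
  (hlu_least hg x ((norm_nonneg _).trans hz)).2 ⟨z, by rwa [Metric.mem_closedBall, dist_eq_norm], rfl⟩

lemma hll_iff (hg : ∀ y, HasGradientAt g (Dg y) y) {x : Euc n} {t : ℝ} (y : Euc n) :
    y ∈ HLL g x t ↔ ‖y - x‖ ≤ t ∧ ∀ z, ‖z - x‖ ≤ t → g y ≤ g z := by
  constructor
  · rintro ⟨h1, h2⟩
    exact ⟨h1, fun z hz => h2 ▸ hlu_le hg hz⟩
  · rintro ⟨h1, h2⟩
    refine ⟨h1, le_antisymm ?_ (hlu_le hg h1)⟩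
    obtain ⟨z, hz, e⟩ := (hlu_least hg x ((norm_nonneg _).trans h1)).1
    rw [← e]
    exact h2 z (by rwa [Metric.mem_closedBall, dist_eq_norm] at hz)

lemma hll_nonempty (hg : ∀ y, HasGradientAt g (Dg y) y) (x : Euc n) {t : ℝ} (ht : 0 ≤ t) :
    (HLL g x t).Nonempty := by
  obtain ⟨z, hz, e⟩ := (hlu_least hg x ht).1
  exact ⟨z, by rwa [Metric.mem_closedBall, dist_eq_norm] at hz, e⟩

lemma min_inner (hg : ∀ y, HasGradientAt g (Dg y) y) {x : Euc n} {t : ℝ} {y z : Euc n}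
    (hmin : IsLocalMinOn g (Metric.closedBall x t) y)
    (hy : y ∈ Metric.closedBall x t) (hz : z ∈ Metric.closedBall x t) :
    0 ≤ inner ℝ (Dg y) (z - y) := by
  have hm : z - y ∈ posTangentConeAt (Metric.closedBall x t) y :=
    mem_posTangentConeAt_of_segment_subset ((convex_closedBall x t).segment_subset hy
      (by rwa [add_sub_cancel]))
  have h3 := hmin.hasFDerivWithinAt_nonneg (hg y).hasFDerivAt.hasFDerivWithinAt hm
  rwa [InnerProductSpace.toDual_apply_apply] at h3

lemma hll_char (hg : ∀ y, HasGradientAt g (Dg y) y) {x : Euc n} {t : ℝ} {y : Euc n}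
    (ht : 0 < t) (hy : y ∈ HLL g x t) (hD : Dg y ≠ 0) : x = charX Dg y t := by
  obtain ⟨h1, h2⟩ := (hll_iff hg y).1 hy
  have hmin : IsLocalMinOn g (Metric.closedBall x t) y := by
    refine IsMinOn.localize fun z hz => h2 z ?_
    rwa [Metric.mem_closedBall, dist_eq_norm] at hz
  have hN := nv_norm hD
  have hz : x - t • Nv Dg y ∈ Metric.closedBall x t := by
    rw [Metric.mem_closedBall, dist_eq_norm, sub_sub_cancel_left, norm_neg, norm_smul, hN, mul_one,
      Real.norm_eq_abs, abs_of_pos ht]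
  have hyb : y ∈ Metric.closedBall x t := by rwa [Metric.mem_closedBall, dist_eq_norm]
  have h3 : 0 ≤ ‖Dg y‖ * inner ℝ (x - t • Nv Dg y - y) (Nv Dg y) := by
    rw [← inner_dg hD]
    exact min_inner hg hmin hyb hz
  have h4 : 0 ≤ inner ℝ (x - t • Nv Dg y - y) (Nv Dg y) :=
    nonneg_of_mul_nonneg_right h3 (norm_pos_iff.2 hD)
  have e : x - t • Nv Dg y - y = (x - y) - t • Nv Dg y := by abel
  rw [e, inner_sub_left, real_inner_smul_left, real_inner_self_eq_norm_sq, hN] at h4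
  rw [norm_sub_rev] at h1
  have h5 : ‖(x - y) - t • Nv Dg y‖ ^ 2 ≤ 0 := by
    rw [norm_sub_sq_real, norm_smul, hN, real_inner_smul_right, Real.norm_eq_abs, mul_one, sq_abs]
    nlinarith [norm_nonneg (x - y)]
  have h6 : (x - y) - t • Nv Dg y = 0 := by
    rw [← norm_eq_zero]
    exact pow_eq_zero_iff (two_ne_zero) |>.1 (le_antisymm h5 (sq_nonneg _))
  have h7 : x - y = t • Nv Dg y := sub_eq_zero.1 h6
  rw [charX, ← Nv.eq_1, ← h7, add_sub_cancel]

lemma hll_inner (hg : ∀ y, HasGradientAt g (Dg y) y) {x : Euc n} {t : ℝ} {y : Euc n}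
    (ht : 0 < t) (hy : y ∈ HLL g x t) : inner ℝ (Dg y) (y - x) = - t * ‖Dg y‖ := by
  by_cases hD : Dg y = 0
  · simp [hD]
  · have e : y - x = -(t • Nv Dg y) := by
      rw [hll_char hg ht hy hD, charX, ← Nv.eq_1]; abel
    rw [inner_dg hD, e, inner_neg_left, real_inner_smul_left, real_inner_self_eq_norm_sq,
      nv_norm hD]
    ring

lemma diff_unique (hg : ∀ y, HasGradientAt g (Dg y) y) {x : Euc n} {t : ℝ}
    (hd : DifferentiableAt ℝ (fun q : Euc n × ℝ => HLu g q.1 q.2) (x, t))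
    {y y' : Euc n} (hy : y ∈ HLL g x t) (hy' : y' ∈ HLL g x t) : Dg y = Dg y' := by
  obtain ⟨f, hf⟩ := hd
  have hin : HasFDerivAt (fun h : Euc n => (x + h, t)) (ContinuousLinearMap.inl ℝ (Euc n) ℝ) 0 := by
    have := ((hasFDerivAt_id (𝕜 := ℝ) (0 : Euc n)).const_add x).prodMk
      (hasFDerivAt_const (𝕜 := ℝ) t (0 : Euc n))
    exact this
  have hψ : HasFDerivAt (fun h : Euc n => HLu g (x + h) t)
      (f.comp (ContinuousLinearMap.inl ℝ (Euc n) ℝ)) 0 := by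
    refine HasFDerivAt.comp (g := fun q : Euc n × ℝ => HLu g q.1 q.2)
      (f := fun h : Euc n => (x + h, t)) 0 ?_ hin
    simpa using hf
  have key : ∀ z ∈ HLL g x t, InnerProductSpace.toDual ℝ (Euc n) (Dg z) =
      f.comp (ContinuousLinearMap.inl ℝ (Euc n) ℝ) := by
    intro z hz
    have h1 : HasFDerivAt (fun h : Euc n => g (z + h)) (InnerProductSpace.toDual ℝ (Euc n) (Dg z)) 0 := by
      have a := (hg z).hasFDerivAt
      have b : HasFDerivAt (fun h : Euc n => z + h) (ContinuousLinearMap.id ℝ (Euc n)) 0 :=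
        (hasFDerivAt_id (𝕜 := ℝ) (0 : Euc n)).const_add z
      have := HasFDerivAt.comp (g := g) (f := fun h : Euc n => z + h) 0 (by simpa using a) b
      exact this.congr_fderiv (ContinuousLinearMap.comp_id _)
    have h2 := h1.sub hψ
    have hm : IsLocalMin ((fun h : Euc n => g (z + h)) - fun h : Euc n => HLu g (x + h) t) 0 := by
      refine Filter.Eventually.of_forall fun h => ?_
      have e1 : g z = HLu g x t := hz.2
      have e2 : HLu g (x + h) t ≤ g (z + h) := hlu_le hg (by
        rw [add_sub_add_right_eq_sub]; exact hz.1)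
      simp only [Pi.sub_apply, add_zero, e1]
      linarith
    have := hm.hasFDerivAt_eq_zero h2
    exact sub_eq_zero.1 this
  exact (InnerProductSpace.toDual ℝ (Euc n)).injective ((key y hy).trans (key y' hy').symm)

lemma diff_of_unique (hg2 : ContDiff ℝ 2 g) (hg : ∀ y, HasGradientAt g (Dg y) y) {x₀ : Euc n}
    {t₀ : ℝ} (ht₀ : 0 < t₀) {p : Euc n} (hp : ∀ y ∈ HLL g x₀ t₀, Dg y = p) :
    DifferentiableAt ℝ (fun q : Euc n × ℝ => HLu g q.1 q.2) (x₀, t₀) := by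
  set Λ : Euc n × ℝ →L[ℝ] ℝ :=
    (InnerProductSpace.toDual ℝ (Euc n) p).comp (ContinuousLinearMap.fst ℝ (Euc n) ℝ)
      - ‖p‖ • ContinuousLinearMap.snd ℝ (Euc n) ℝ with hΛ
  have hΛa : ∀ q, Λ q = inner ℝ p q.1 - ‖p‖ * q.2 := fun q => by simp [hΛ]
  refine ⟨Λ, ?_⟩
  rw [hasFDerivAt_iff_isLittleO, Asymptotics.isLittleO_iff]
  intro ε hε
  have hpos : ∀ᶠ q : Euc n × ℝ in 𝓝 (x₀, t₀), 0 < q.2 :=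
    continuous_snd.continuousAt.eventually (lt_mem_nhds ht₀)
  -- scaled points
  have hscale : ∀ z, ‖z - x₀‖ ≤ t₀ → ∀ q : Euc n × ℝ, 0 < q.2 →
      ‖(q.1 + (q.2 / t₀) • (z - x₀)) - q.1‖ ≤ q.2 := by
    intro z hz q hq
    rw [add_sub_cancel_left, norm_smul, Real.norm_eq_abs, abs_of_pos (div_pos hq ht₀)]
    calc q.2 / t₀ * ‖z - x₀‖ ≤ q.2 / t₀ * t₀ := by gcongr
      _ = q.2 := by field_simp
  obtain ⟨y₀, hy₀⟩ := hll_nonempty hg x₀ ht₀.le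
  have hup : ∀ᶠ q : Euc n × ℝ in 𝓝 (x₀, t₀),
      HLu g q.1 q.2 - HLu g x₀ t₀ - Λ (q - (x₀, t₀)) ≤ ε * ‖q - (x₀, t₀)‖ := by
    have e0 : x₀ + (t₀ / t₀) • (y₀ - x₀) = y₀ := by rw [div_self ht₀.ne', one_smul]; abel
    have hin : HasFDerivAt (fun q : Euc n × ℝ => q.1 + (q.2 / t₀) • (y₀ - x₀))
        (ContinuousLinearMap.fst ℝ (Euc n) ℝ +
          (t₀⁻¹ • ContinuousLinearMap.snd ℝ (Euc n) ℝ).smulRight (y₀ - x₀)) (x₀, t₀) := by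
      have a : HasFDerivAt (fun q : Euc n × ℝ => q.2 / t₀)
          (t₀⁻¹ • ContinuousLinearMap.snd ℝ (Euc n) ℝ) (x₀, t₀) := by
        have := (hasFDerivAt_snd (𝕜 := ℝ) (p := ((x₀, t₀) : Euc n × ℝ))).const_smul t₀⁻¹
        refine this.congr_of_eventuallyEq (Filter.Eventually.of_forall fun q => ?_)
        simp [div_eq_inv_mul]
      exact (hasFDerivAt_fst (𝕜 := ℝ) (p := ((x₀, t₀) : Euc n × ℝ))).add (a.smul_const (y₀ - x₀))
    have hφ := HasFDerivAt.comp (g := g)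
      (f := fun q : Euc n × ℝ => q.1 + (q.2 / t₀) • (y₀ - x₀)) (x₀, t₀)
      (by simpa only [e0] using (hg y₀).hasFDerivAt) hin
    have hl := (Asymptotics.isLittleO_iff.1 (hasFDerivAt_iff_isLittleO.1 hφ)) hε
    filter_upwards [hl, hpos] with q hq hq0
    have e1 : g y₀ = HLu g x₀ t₀ := hy₀.2
    have e2 := hlu_le hg (hscale y₀ hy₀.1 q hq0)
    have e3 := le_of_abs_le hq
    have e4 := hll_inner hg ht₀ hy₀
    rw [hp y₀ hy₀] at e4
    simp only [Function.comp_apply, e0, e1, ContinuousLinearMap.comp_apply,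
      add_apply, ContinuousLinearMap.smulRight_apply,
      smul_apply, InnerProductSpace.toDual_apply_apply,
      ContinuousLinearMap.coe_fst', ContinuousLinearMap.coe_snd', hp y₀ hy₀,
      inner_add_right, real_inner_smul_right, smul_eq_mul, e4] at e3
    rw [hΛa]
    have e5 : t₀⁻¹ * (q - (x₀, t₀)).2 * (-t₀ * ‖p‖) = - (‖p‖ * (q - (x₀, t₀)).2) := by
      field_simp
    rw [e5] at e3
    linarith
  have hlow : ∀ᶠ q : Euc n × ℝ in 𝓝 (x₀, t₀),
      -(ε * ‖q - (x₀, t₀)‖) ≤ HLu g q.1 q.2 - HLu g x₀ t₀ - Λ (q - (x₀, t₀)) := by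
    have hY : ∀ q : Euc n × ℝ, ∃ y, 0 < q.2 → y ∈ HLL g q.1 q.2 := by
      intro q
      by_cases h : 0 < q.2
      · obtain ⟨y, hy⟩ := hll_nonempty hg q.1 h.le
        exact ⟨y, fun _ => hy⟩
      · exact ⟨0, fun h' => absurd h' h⟩
    choose Y hY using hY
    refine Filter.mem_iff_ultrafilter.2 fun F hF => ?_
    change ∀ᶠ q in (F : Filter (Euc n × ℝ)), _
    have hposF := hF hpos
    have hfst : Tendsto (fun q : Euc n × ℝ => q.1) F (𝓝 x₀) :=
      (continuous_fst.tendsto ((x₀, t₀) : Euc n × ℝ)).mono_left hF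
    have hsnd : Tendsto (fun q : Euc n × ℝ => q.2) F (𝓝 t₀) :=
      (continuous_snd.tendsto ((x₀, t₀) : Euc n × ℝ)).mono_left hF
    have hbd : ∀ᶠ q in (F : Filter (Euc n × ℝ)), Y q ∈ Metric.closedBall x₀ (t₀ + 2) := by
      have b1 : ∀ᶠ q in (F : Filter (Euc n × ℝ)), q.1 ∈ Metric.ball x₀ 1 :=
        hfst.eventually (Metric.ball_mem_nhds x₀ one_pos)
      have b2 : ∀ᶠ q in (F : Filter (Euc n × ℝ)), q.2 < t₀ + 1 :=
        hsnd.eventually (gt_mem_nhds (lt_add_one t₀))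
      filter_upwards [b1, b2, hposF] with q h1 h2 h3
      have := (hY q h3).1
      rw [← dist_eq_norm] at this
      rw [Metric.mem_closedBall]
      rw [Metric.mem_ball] at h1
      linarith [dist_triangle (Y q) q.1 x₀]
    obtain ⟨y, -, hy⟩ := (isCompact_closedBall x₀ (t₀ + 2)).ultrafilter_le_nhds (F.map Y)
      (Filter.le_principal_iff.2 hbd)
    have hYt : Tendsto Y F (𝓝 y) := hy
    have hyL : y ∈ HLL g x₀ t₀ := by
      rw [hll_iff hg]
      constructor
      · refine le_of_tendsto_of_tendsto (hYt.sub hfst).norm hsnd ?_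
        filter_upwards [hposF] with q hq using (hY q hq).1
      · intro z hz
        have a1 : Tendsto (fun q => g (Y q)) F (𝓝 (g y)) := ((g_cont hg).tendsto y).comp hYt
        have a2 : Tendsto (fun q : Euc n × ℝ => g (q.1 + (q.2 / t₀) • (z - x₀))) F (𝓝 (g z)) := by
          refine ((g_cont hg).tendsto z).comp ?_
          have := hfst.add ((hsnd.div_const t₀).smul_const (z - x₀))
          rwa [div_self ht₀.ne', one_smul, add_sub_cancel] at this
        refine le_of_tendsto_of_tendsto a1 a2 ?_
        filter_upwards [hposF] with q hq
        exact ((hll_iff hg _).1 (hY q hq)).2 _ (hscale z hz q hq)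
    have hDy := hp y hyL
    have hst : HasStrictFDerivAt g (InnerProductSpace.toDual ℝ (Euc n) p) y := by
      have := (hg2.contDiffAt (x := y)).hasStrictFDerivAt (by norm_num)
      rwa [(hg y).hasFDerivAt.fderiv, hDy] at this
    have hε3 : 0 < ε / 3 := by positivity
    have hs := (hasStrictFDerivAt_iff_isLittleO.1 hst).def hε3
    have hin := hll_inner hg ht₀ hyL
    rw [hDy] at hin
    have hYx : Tendsto (fun q : Euc n × ℝ => q.2⁻¹ • (Y q - q.1)) F (𝓝 (t₀⁻¹ • (y - x₀))) :=
      (hsnd.inv₀ ht₀.ne').smul (hYt.sub hfst)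
    have hY2 : Tendsto (fun q : Euc n × ℝ => x₀ + t₀ • (q.2⁻¹ • (Y q - q.1))) F (𝓝 y) := by
      have := (hYx.const_smul t₀).const_add x₀
      rwa [smul_smul, mul_inv_cancel₀ ht₀.ne', one_smul, add_sub_cancel] at this
    have hs' := (hYt.prodMk_nhds hY2).eventually hs
    have hip : Tendsto (fun q : Euc n × ℝ => inner ℝ p (q.2⁻¹ • (Y q - q.1))) F (𝓝 (-‖p‖)) := by
      have : Tendsto (fun q : Euc n × ℝ => inner ℝ p (q.2⁻¹ • (Y q - q.1))) F
          (𝓝 (inner ℝ p (t₀⁻¹ • (y - x₀)))) := tendsto_const_nhds.inner hYx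
      rw [real_inner_smul_right, hin] at this
      convert this using 2
      field_simp
    have hip' := hip.eventually (Metric.closedBall_mem_nhds _ hε3)
    filter_upwards [hposF, hs', hip'] with q hq h1 h2
    have hYL := hY q hq
    set v := q.2⁻¹ • (Y q - q.1) with hv
    have hv1 : ‖v‖ ≤ 1 := by
      rw [hv, norm_smul, norm_inv, Real.norm_eq_abs, abs_of_pos hq, inv_mul_le_iff₀ hq, mul_one]
      exact hYL.1
    have hYv : Y q = q.1 + q.2 • v := by
      rw [hv, smul_smul, mul_inv_cancel₀ hq.ne', one_smul, add_sub_cancel]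
    have hdiff : Y q - (x₀ + t₀ • v) = (q - (x₀, t₀)).1 + (q - (x₀, t₀)).2 • v := by
      rw [hYv, Prod.fst_sub, Prod.snd_sub, sub_smul]; dsimp only; abel
    have hge : HLu g x₀ t₀ ≤ g (x₀ + t₀ • v) := hlu_le hg (by
      rw [add_sub_cancel_left, norm_smul, Real.norm_eq_abs, abs_of_pos ht₀]
      nlinarith)
    have hYu : g (Y q) = HLu g q.1 q.2 := hYL.2
    rw [hdiff, InnerProductSpace.toDual_apply_apply, inner_add_right, real_inner_smul_right] at h1
    rw [Real.dist_eq] at h2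
    rw [hΛa]
    have n1 : ‖(q - (x₀, t₀)).1‖ ≤ ‖q - (x₀, t₀)‖ := norm_fst_le _
    have n2 : ‖(q - (x₀, t₀)).2‖ ≤ ‖q - (x₀, t₀)‖ := norm_snd_le _
    have n3 : ‖(q - (x₀, t₀)).1 + (q - (x₀, t₀)).2 • v‖ ≤ 2 * ‖q - (x₀, t₀)‖ := by
      refine (norm_add_le _ _).trans ?_
      rw [norm_smul]
      nlinarith [norm_nonneg (q - (x₀, t₀)).2, norm_nonneg v]
    have n4 := neg_le_of_abs_le h1
    have n5 : |(q - (x₀, t₀)).2 * (inner ℝ p v - -‖p‖)| ≤ ‖q - (x₀, t₀)‖ * (ε / 3) := by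
      rw [abs_mul]
      exact mul_le_mul n2 h2 (abs_nonneg _) (norm_nonneg _)
    have n6 := neg_le_of_abs_le n5
    have n7 : ε / 3 * ‖(q - (x₀, t₀)).1 + (q - (x₀, t₀)).2 • v‖ ≤
        ε / 3 * (2 * ‖q - (x₀, t₀)‖) := by gcongr
    rw [hYu] at n4
    nlinarith
  filter_upwards [hup, hlow] with q h1 h2
  rw [Real.norm_eq_abs]
  exact abs_le.2 ⟨h2, h1⟩

lemma mem_hll_char (hg : ∀ y, HasGradientAt g (Dg y) y) {y : Euc n} (hD : Dg y ≠ 0) {s : ℝ}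
    (hs : 0 < s) : y ∈ HLL g (charX Dg y s) s ↔ Pm g Dg y s := by
  rw [hll_iff hg]
  simp only [bl_iff hD hs.le]
  exact ⟨fun h => h.2, fun h => ⟨bl_self y s, h⟩⟩

lemma hll_char_eq (hg : ∀ y, HasGradientAt g (Dg y) y) {y : Euc n} (hD : Dg y ≠ 0) {s : ℝ}
    (hs : 0 < s) : HLL g (charX Dg y s) s = {y} ↔ Um g Dg y s := by
  constructor
  · intro h z hz hne
    have hP := (mem_hll_char hg hD hs).1 (h ▸ Set.mem_singleton y)
    refine lt_of_le_of_ne (hP z hz) fun e => hne ?_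
    have : z ∈ HLL g (charX Dg y s) s := by
      rw [hll_iff hg]
      simp only [bl_iff hD hs.le]
      exact ⟨hz, fun w hw => e ▸ hP w hw⟩
    rwa [h] at this
  · intro h
    ext z
    rw [Set.mem_singleton_iff]
    constructor
    · intro hz
      by_contra hne
      rw [hll_iff hg] at hz
      simp only [bl_iff hD hs.le] at hz
      exact absurd (hz.2 y (bl_self y s)) (not_le.2 (h z hz.1 hne))
    · rintro rfl
      exact (mem_hll_char hg hD hs).2 h.pm

lemma tm_eq (hg : ∀ y, HasGradientAt g (Dg y) y) :
    TM g Dg = (fun p : Euc n × ℝ => (charX Dg p.1 p.2, p.2)) '' Aset g Dg := by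
  ext q
  constructor
  · rintro ⟨y, t, hD, -, ht, h1, h2, rfl⟩
    refine ⟨(y, t), ⟨hD, ht, ?_, ?_⟩, rfl⟩
    · refine Pm_closed hg ht fun s hs hst => ?_
      by_contra hc
      have : tsnd g Dg y ≤ ENNReal.ofReal s :=
        sInf_le ⟨s, ⟨hs, fun h => hc ((mem_hll_char hg hD hs).1 h)⟩, rfl⟩
      have := (ENNReal.ofReal_le_ofReal_iff hs.le).1 (h2.trans this)
      linarith
    · intro s hst hU
      have hst : t < s := hst
      have hs : 0 < s := ht.trans hst
      have : ENNReal.ofReal s ≤ tbar g Dg y :=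
        le_sSup ⟨s, ⟨hs, (hll_char_eq hg hD hs).2 hU⟩, rfl⟩
      have := (ENNReal.ofReal_le_ofReal_iff ht.le).1 (this.trans h1)
      linarith
  · rintro ⟨⟨y, t⟩, ⟨hD, ht, hP, hU⟩, rfl⟩
    dsimp only at hD ht hP hU
    have h1 : tbar g Dg y ≤ ENNReal.ofReal t := by
      refine sSup_le ?_
      rintro _ ⟨s, ⟨hs, he⟩, rfl⟩
      refine ENNReal.ofReal_le_ofReal ?_
      by_contra hc
      exact hU s (not_le.1 hc) ((hll_char_eq hg hD hs).1 he)
    refine ⟨y, t, hD, h1.trans_lt ENNReal.ofReal_lt_top, ht, h1, ?_, rfl⟩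
    refine le_sInf ?_
    rintro _ ⟨s, ⟨hs, he⟩, rfl⟩
    refine ENNReal.ofReal_le_ofReal ?_
    by_contra hc
    exact he ((mem_hll_char hg hD hs).2 (hP.mono hs (not_le.1 hc).le))

lemma sigma_eq (hg2 : ContDiff ℝ 2 g) (hg : ∀ y, HasGradientAt g (Dg y) y) :
    SigmaSet g ∪ T1 g Dg = TM g Dg := by
  apply Set.Subset.antisymm
  · rintro ⟨x, t⟩ (⟨ht, hnd⟩ | h)
    · dsimp only at ht
      have hex : ∃ y ∈ HLL g x t, ∃ z ∈ HLL g x t, Dg y ≠ 0 ∧ z ≠ y := by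
        by_contra hc
        push Not at hc
        apply hnd
        obtain ⟨y₀, hy₀⟩ := hll_nonempty hg x ht.le
        refine diff_of_unique hg2 hg ht (p := Dg y₀) fun y hy => ?_
        by_cases h0 : Dg y₀ = 0
        · by_cases h1 : Dg y = 0
          · rw [h0, h1]
          · rw [hc y hy y₀ hy₀ h1]
        · rw [hc y₀ hy₀ y hy h0]
      obtain ⟨y, hy, z, hz, hD, hne⟩ := hex
      have hx := hll_char hg ht hy hD
      rw [tm_eq hg]
      rw [hx] at hy hz
      refine ⟨(y, t), ⟨hD, ht, (mem_hll_char hg hD ht).1 hy, fun s hs hU => ?_⟩, by rw [hx]⟩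
      have h := (hll_char_eq hg hD ht).2 (hU.mono ht (le_of_lt hs))
      rw [h] at hz
      exact hne hz
    · exact h.1
  · intro q hq
    by_cases hd : DifferentiableAt ℝ (fun q : Euc n × ℝ => HLu g q.1 q.2) q
    · right
      refine ⟨hq, ?_⟩
      rw [tm_eq hg] at hq
      obtain ⟨⟨y, t⟩, ⟨hD, ht, hP, hU⟩, rfl⟩ := hq
      dsimp only at hD ht hP hU ⊢
      have hy := (mem_hll_char hg hD ht).2 hP
      refine ⟨y, Set.Subset.antisymm (fun z hz => ?_) (Set.singleton_subset_iff.2 hy)⟩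
      have e := diff_unique hg hd hy hz
      have h1 := hll_char hg ht hz (e ▸ hD)
      rw [charX, charX, e] at h1
      exact (add_right_cancel h1).symm
    · left
      refine ⟨?_, hd⟩
      obtain ⟨y, t, -, -, ht, -, -, rfl⟩ := hq
      exact ht

end hopflax


theorem SigmaUnionT1_countable_path_components_of_C2 {n : ℕ} (hn : 0 < n) (g : Euc n → ℝ) (Dg : Euc n → Euc n)
    (hg2 : ContDiff ℝ 2 g) (hg : ∀ y, HasGradientAt g (Dg y) y) :
    ∃ 𝒮 : Set (Set (Euc n × ℝ)), 𝒮.Countable ∧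
      (∀ C ∈ 𝒮, C.Nonempty ∧ IsPathConnected C) ∧
      𝒮.PairwiseDisjoint id ∧ ⋃₀ 𝒮 = SigmaSet g ∪ T1 g Dg ∧
      (∀ C ∈ 𝒮, ∀ D : Set (Euc n × ℝ), C ⊆ D → D ⊆ SigmaSet g ∪ T1 g Dg →
        IsPathConnected D → D = C) := by
  rw [sigma_eq hg2 hg, tm_eq hg]
  set Φ : Euc n × ℝ → Euc n × ℝ := fun p => (charX Dg p.1 p.2, p.2) with hΦ
  obtain ⟨D, hDc, hD⟩ := A_countable hg2 hg
  have hcont : ContinuousOn Φ (Aset g Dg) := by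
    have h1 : Continuous Dg := (dg_contDiff hg2 hg).continuous
    have h2 : Continuous (fun p : Euc n × ℝ => Dg p.1) := h1.comp continuous_fst
    refine ContinuousOn.prodMk ?_ continuous_snd.continuousOn
    refine continuous_fst.continuousOn.add (continuous_snd.continuousOn.smul
      (ContinuousOn.smul (ContinuousOn.inv₀ h2.norm.continuousOn fun p hp => ?_) h2.continuousOn))
    exact norm_ne_zero_iff.2 hp.1
  have hjoin : ∀ p c, JoinedIn (Aset g Dg) p c → JoinedIn (Φ '' Aset g Dg) (Φ p) (Φ c) := by
    intro p c h
    have hpc : IsPathConnected (pathComponentIn (Aset g Dg) p) :=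
      isPathConnected_pathComponentIn h.source_mem
    have := (hpc.image' (hcont.mono pathComponentIn_subset)).joinedIn _
      ⟨p, mem_pathComponentIn_self h.source_mem, rfl⟩ _ ⟨c, h, rfl⟩
    exact this.mono (Set.image_mono pathComponentIn_subset)
  refine ⟨(fun c => pathComponentIn (Φ '' Aset g Dg) (Φ c)) '' (D ∩ Aset g Dg),
    (hDc.mono Set.inter_subset_left).image _, ?_, ?_, ?_, ?_⟩
  · rintro _ ⟨c, ⟨-, hc⟩, rfl⟩
    have := isPathConnected_pathComponentIn (F := Φ '' Aset g Dg) (x := Φ c) ⟨c, hc, rfl⟩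
    exact ⟨this.nonempty, this⟩
  · rintro _ ⟨c, ⟨-, hc⟩, rfl⟩ _ ⟨c', ⟨-, hc'⟩, rfl⟩ hne
    refine Set.disjoint_left.2 fun z hz hz' => hne ?_
    exact (pathComponentIn_congr hz).symm.trans (pathComponentIn_congr hz')
  · apply Set.Subset.antisymm
    · refine Set.sUnion_subset ?_
      rintro _ ⟨c, -, rfl⟩
      exact pathComponentIn_subset
    · rintro _ ⟨p, hp, rfl⟩
      obtain ⟨c, hc, hj⟩ := hD p hp
      exact ⟨_, ⟨c, ⟨hc, hj.target_mem⟩, rfl⟩, (hjoin p c hj).symm⟩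
  · rintro _ ⟨c, ⟨-, hc⟩, rfl⟩ E hCE hE hpE
    refine Set.Subset.antisymm ?_ hCE
    exact hpE.subset_pathComponentIn (hCE (mem_pathComponentIn_self ⟨c, hc, rfl⟩)) hE
end
end

section
/- Suppose g is twice continuously differentiable (C²). Let y₀ ∈ ℝⁿ with Dg(y₀) ≠ 0 and let t be real with 0 < t < t̄ₛ(y₀). Then the (Fréchet) derivative at y₀ of the map y ↦ y + t·Dg(y)/|Dg(y)| (defined on the open set {y : Dg(y) ≠ 0}) is an invertible linear map ℝⁿ → ℝⁿ; equivalently, det X_y(y₀,t) ≠ 0, so no point on a characteristic strictly before its first termination time is a conjugate point. -/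
open scoped InnerProductSpace Topology ENNReal
open Filter

noncomputable section

theorem no_conjugate_point_before_first_termination {n : ℕ} (hn : 0 < n) (g : Euc n → ℝ) (Dg : Euc n → Euc n)
    (hg2 : ContDiff ℝ 2 g) (hg : ∀ y, HasGradientAt g (Dg y) y)
    (y₀ : Euc n) (hy : Dg y₀ ≠ 0) (t : ℝ) (ht : 0 < t)
    (hts : ENNReal.ofReal t < tbar g Dg y₀) :
    DifferentiableAt ℝ (fun y : Euc n => y + t • (‖Dg y‖⁻¹ • Dg y)) y₀ ∧
    Function.Bijective ⇑(fderiv ℝ (fun y : Euc n => y + t • (‖Dg y‖⁻¹ • Dg y)) y₀) := by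
  classical
  obtain ⟨_, ⟨s, ⟨hs0, hL⟩, rfl⟩, hlt⟩ := lt_sSup_iff.mp hts
  have hst : t < s := (ENNReal.ofReal_lt_ofReal_iff hs0).mp hlt
  have hpos : 0 < ‖Dg y₀‖ := norm_pos_iff.mpr hy
  have hDg : Dg = fun y => (InnerProductSpace.toDual ℝ (Euc n)).symm (fderiv ℝ g y) := by
    funext y
    rw [(hg y).hasFDerivAt.fderiv]; simp
  have hDd : Differentiable ℝ Dg := by
    have h1 : Differentiable ℝ (fderiv ℝ g) :=
      (hg2.fderiv_right (m := 1) (by norm_num)).differentiable (by norm_num)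
    rw [hDg]
    exact (InnerProductSpace.toDual ℝ (Euc n)).symm.toContinuousLinearEquiv.differentiable.comp h1
  set N : Euc n → Euc n := fun y => ‖Dg y‖⁻¹ • Dg y with hN
  have hnd : DifferentiableAt ℝ (fun y => ‖Dg y‖) y₀ := (hDd y₀).norm ℝ hy
  have hNd : DifferentiableAt ℝ N y₀ := (hnd.inv hpos.ne').smul (hDd y₀)
  have hev : ∀ᶠ y in 𝓝 y₀, Dg y ≠ 0 := hDd.continuous.continuousAt.eventually_ne hy
  have hN1 : ∀ y, Dg y ≠ 0 → ‖N y‖ = 1 := by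
    intro y h
    simp [hN, norm_smul, h]
  have hXd : DifferentiableAt ℝ (fun y : Euc n => y + t • N y) y₀ :=
    differentiableAt_id.add (hNd.const_smul t)
  refine ⟨hXd, ?_⟩
  have hX' : ∀ w, fderiv ℝ (fun y : Euc n => y + t • N y) y₀ w = w + t • fderiv ℝ N y₀ w := by
    intro w
    have := (hasFDerivAt_id (𝕜 := ℝ) y₀).add (hNd.hasFDerivAt.const_smul t)
    have h2 : HasFDerivAt (fun y : Euc n => y + t • N y) _ y₀ := this
    rw [h2.fderiv]; simp
  have horth : ∀ w, ⟪fderiv ℝ N y₀ w, N y₀⟫_ℝ = 0 := by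
    intro w
    have h1 : HasFDerivAt (fun y => ⟪N y, N y⟫_ℝ) _ y₀ := hNd.hasFDerivAt.inner ℝ hNd.hasFDerivAt
    have h2 : (fun y => ⟪N y, N y⟫_ℝ) =ᶠ[𝓝 y₀] fun _ => (1:ℝ) := by
      filter_upwards [hev] with y h
      rw [real_inner_self_eq_norm_sq, hN1 y h]; norm_num
    have h3 := h1.unique ((hasFDerivAt_const (1:ℝ) y₀).congr_of_eventuallyEq h2)
    have h4 := congrArg (fun L => L w) h3
    simp [fderivInnerCLM_apply, real_inner_comm] at h4
    rw [real_inner_comm]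
    linarith
  have hH : ∀ w, fderiv ℝ Dg y₀ w
      = ‖Dg y₀‖ • fderiv ℝ N y₀ w + (fderiv ℝ (fun y => ‖Dg y‖) y₀ w) • N y₀ := by
    intro w
    have h1 : HasFDerivAt (fun y => ‖Dg y‖ • N y) _ y₀ := hnd.hasFDerivAt.smul hNd.hasFDerivAt
    have h2 : (fun y => ‖Dg y‖ • N y) = Dg := by
      funext y
      by_cases h : Dg y = 0
      · simp [h]
      · simp [hN, smul_smul, h]
    rw [h2] at h1
    rw [h1.fderiv]; simp
  have hmin : ∀ z : Euc n, ‖z - s • N y₀‖ ≤ s → g y₀ ≤ g (y₀ + z) := by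
    intro z hz
    have hm : y₀ ∈ HLL g (charX Dg y₀ s) s := by rw [hL]; rfl
    rw [hm.2]
    unfold HLu
    refine csInf_le ?_ ⟨y₀ + z, ?_, rfl⟩
    · exact ((isCompact_closedBall _ _).image hg2.continuous).bddBelow
    · rw [Metric.mem_closedBall, dist_eq_norm]
      have e : y₀ + z - charX Dg y₀ s = z - s • N y₀ := by
        change y₀ + z - (y₀ + s • N y₀) = _
        abel
      rw [e]; exact hz
  have hinj : ∀ w, w + t • fderiv ℝ N y₀ w = 0 → w = 0 := by
    intro w hw
    by_contra hw0
    have hwp : 0 < ‖w‖ := norm_pos_iff.mpr hw0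
    have hwe : w = -(t • fderiv ℝ N y₀ w) := eq_neg_of_add_eq_zero_left hw
    have hwN : ⟪w, N y₀⟫_ℝ = 0 := by
      rw [hwe, inner_neg_left, real_inner_smul_left, horth]; simp
    have hNw : ⟪N y₀, w⟫_ℝ = 0 := by rw [real_inner_comm]; exact hwN
    have hself : ‖w‖ ^ 2 + t * ⟪fderiv ℝ N y₀ w, w⟫_ℝ = 0 := by
      have := congrArg (fun x => ⟪x, w⟫_ℝ) hw
      simpa [inner_add_left, real_inner_smul_left] using this
    have hHw : ⟪fderiv ℝ Dg y₀ w, w⟫_ℝ = ‖Dg y₀‖ * ⟪fderiv ℝ N y₀ w, w⟫_ℝ := by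
      rw [hH, inner_add_left, real_inner_smul_left, real_inner_smul_left, hNw]; ring
    obtain ⟨r, htr, hrs⟩ := exists_between hst
    have hr0 : 0 < r := ht.trans htr
    set κ : ℝ := ‖w‖ ^ 2 / (2 * r) with hκ
    have hκr : 2 * r * κ = ‖w‖ ^ 2 := by rw [hκ]; field_simp
    have hκ0 : 0 < κ := by positivity
    have hDN : ⟪Dg y₀, N y₀⟫_ℝ = ‖Dg y₀‖ := by
      simp only [hN]
      rw [real_inner_smul_right, real_inner_self_eq_norm_sq]; field_simp
    let c : ℝ → Euc n := fun τ => y₀ + (τ • w + (τ ^ 2 * κ) • N y₀)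
    have hc : ∀ τ, HasDerivAt c (w + (2 * τ * κ) • N y₀) τ := by
      intro τ
      have h1 := (hasDerivAt_id τ).smul_const w
      have h2 := (((hasDerivAt_id τ).pow 2).mul_const κ).smul_const (N y₀)
      have h3 := (h1.add h2).const_add y₀
      have h4 : HasDerivAt c _ τ := h3
      refine h4.congr_deriv ?_
      simp
    have hc0 : c 0 = y₀ := by simp [c]
    have hφ : ∀ τ, HasDerivAt (fun τ => g (c τ)) ⟪Dg (c τ), w + (2 * τ * κ) • N y₀⟫_ℝ τ := by
      intro τ
      have := (hg (c τ)).hasFDerivAt.comp_hasDerivAt τ (hc τ)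
      have h4 : HasDerivAt (fun τ => g (c τ)) _ τ := this
      refine h4.congr_deriv ?_
      simp
    have hφ' : deriv (fun τ => g (c τ)) = fun τ => ⟪Dg (c τ), w + (2 * τ * κ) • N y₀⟫_ℝ :=
      funext fun τ => (hφ τ).deriv
    have hφ2 : HasDerivAt (fun τ => ⟪Dg (c τ), w + (2 * τ * κ) • N y₀⟫_ℝ)
        (2 * κ * ‖Dg y₀‖ + ⟪fderiv ℝ Dg y₀ w, w⟫_ℝ) 0 := by
      have hd : HasFDerivAt Dg (fderiv ℝ Dg y₀) (c 0) := by rw [hc0]; exact (hDd y₀).hasFDerivAt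
      have h1 : HasDerivAt (fun τ => Dg (c τ)) _ 0 := hd.comp_hasDerivAt (0:ℝ) (hc 0)
      have h2 : HasDerivAt (fun τ : ℝ => w + (2 * τ * κ) • N y₀) ((2 * κ) • N y₀) 0 := by
        have := ((((hasDerivAt_id (0:ℝ)).const_mul 2).mul_const κ).smul_const (N y₀)).const_add w
        have h4 : HasDerivAt (fun τ : ℝ => w + (2 * τ * κ) • N y₀) _ 0 := this
        refine h4.congr_deriv ?_
        simp
      have h3 := h1.inner ℝ h2
      refine h3.congr_deriv ?_
      simp [hc0, real_inner_smul_right, hDN]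
    have hneg : 2 * κ * ‖Dg y₀‖ + ⟪fderiv ℝ Dg y₀ w, w⟫_ℝ < 0 := by
      rw [hHw]
      have h1 : 2 * κ + ⟪fderiv ℝ N y₀ w, w⟫_ℝ < 0 := by
        have : t * (2 * κ + ⟪fderiv ℝ N y₀ w, w⟫_ℝ) < 0 := by nlinarith
        by_contra h
        push Not at h
        nlinarith [mul_nonneg ht.le h]
      nlinarith
    have hderiv2 : deriv (deriv (fun τ => g (c τ))) 0
        = 2 * κ * ‖Dg y₀‖ + ⟪fderiv ℝ Dg y₀ w, w⟫_ℝ := by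
      rw [hφ']; exact hφ2.deriv
    have hmax : IsLocalMax (fun τ => g (c τ)) 0 := by
      apply isLocalMax_of_deriv_deriv_neg
      · rw [hderiv2]; exact hneg
      · rw [hφ']
        simp only [hc0]
        have : Dg y₀ = ‖Dg y₀‖ • N y₀ := by simp [hN, smul_smul, hy]
        rw [this]; simp [real_inner_smul_left, hNw]
      · exact (hφ 0).continuousAt
    have hsm : ∀ᶠ τ : ℝ in 𝓝 0, τ ^ 2 * κ ^ 2 < 2 * κ * (s - r) := by
      have : Continuous fun τ : ℝ => τ ^ 2 * κ ^ 2 := by fun_prop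
      apply this.continuousAt.eventually_lt_const
      have : 0 < s - r := by linarith
      simp; positivity
    have hconst : (fun τ => g (c τ)) =ᶠ[𝓝 0] fun _ => g y₀ := by
      filter_upwards [hmax, hsm] with τ h1 h2
      refine le_antisymm (by simpa [hc0] using h1) (hmin _ ?_)
      refine (sq_le_sq₀ (norm_nonneg _) hs0.le).mp ?_
      have e : τ • w + (τ ^ 2 * κ) • N y₀ - s • N y₀ = τ • w + (τ ^ 2 * κ - s) • N y₀ := by
        rw [sub_smul]; abel
      rw [e, norm_add_sq_real, norm_smul, norm_smul, hN1 y₀ hy, real_inner_smul_left,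
        real_inner_smul_right, hwN, mul_pow, mul_pow, Real.norm_eq_abs, Real.norm_eq_abs, sq_abs,
        sq_abs, ← hκr]
      nlinarith [mul_le_mul_of_nonneg_left h2.le (sq_nonneg τ)]
    have h0 : deriv (deriv (fun τ => g (c τ))) 0 = 0 := by
      rw [hconst.deriv.deriv_eq]; simp
    rw [hderiv2] at h0
    linarith
  have hi : Function.Injective (fderiv ℝ (fun y : Euc n => y + t • N y) y₀) := by
    rw [injective_iff_map_eq_zero]
    intro w hw
    rw [hX'] at hw
    exact hinj w hw
  exact ⟨hi, (LinearMap.injective_iff_surjective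
    (f := (fderiv ℝ (fun y : Euc n => y + t • N y) y₀ : Euc n →ₗ[ℝ] Euc n))).mp hi⟩
end
end
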